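/- Let a, b ∈ ℂ with a ∉ ℤ, b ∉ ℤ, and a+b ∉ ℤ, and let ξ ∈ (0,1). Define w_{1,0}(ξ) = ₂F₁(a,b;a+b;ξ), w_{2,0}(ξ) = ξ^{1-a-b} ₂F₁(1-b,1-a;2-a-b;ξ), and w_{2,1}^{ln}(ξ) = ₂F₁(a,b;1;1-ξ) · ln(1-ξ) + Σ_{n=1}^∞ ((a)_n (b)_n/(n!)²) (1-ξ)^n [ψ(a+n)-ψ(a)+ψ(b+n)-ψ(b)-2ψ(n+1)-2γ_E]. Then w_{2,1}^{ln}(ξ) = -[ψ(1-a)+ψ(1-b)+2γ_E] · (Γ(1-a-b)/(Γ(1-a)Γ(1-b))) · w_{1,0}(ξ) - [ψ(a)+ψ(b)+2γ_E] · (Γ(a+b-1)/(Γ(a)Γ(b))) · w_{2,0}(ξ). -/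

import Mathlib

/-!
Both sides solve the hypergeometric equation on `(0,1)`, so everything is decided by the behaviour
at `ξ = 1`.

Multiplied by `Γ(α)Γ(β)/Γ(α+β)`, the series `₂F₁(α,β;α+β;ξ)` has coefficients
`Γ(α+n)Γ(β+n)/(Γ(α+β+n) n!) ~ 1/n`, and the key fact is the regularised sum `tendsto_sum_zbCoeff`,
`∑ (coefficient - 1/(n+1)) = -(ψ(α)+ψ(β)+2γ)`. Raising `α` by one changes the partial sums by a
telescoping amount that tends to `1/α` (`sum_zbCoeff_add_nat`); after `m` such steps the partial sums
differ from those started at `α = 1` by `O(1/m)`, uniformly in their length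
(`sum_zbCoeff_shift_le`). Letting `m → ∞` produces the partial fractions of `ψ(α)`
(`tendsto_digamma`, the logarithmic derivative of the Weierstrass product), and for `α = 1` the
coefficients are `1/(β+n)`, which produces `ψ(β)`.

Abel's limit theorem turns this into the asymptotics
`-log(1-ξ) - (ψ(α)+ψ(β)+2γ) + o(1)` as `ξ → 1`. Write `F = ₂F₁(a,b;1;1-ξ)` and `S` for the
logarithmic solution. For `(α,β) = (a,b)` and for `(α,β) = (1-b,1-a)` the normalised solution at
`ξ = 0` plus `S + (ψ(α)+ψ(β)+2γ) F` therefore tends to `0` at `ξ = 1` (`tendsto_connection`). A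
solution with that property vanishes, since by the Wronskian every solution is a combination of `F`
and `S` (`IsSol.exists_eq`, `IsSol.eq_zero`). This gives `connection_first` and `connection_second`;
eliminating `F` between them, with the reflection formulas for `Γ` and `ψ`, is the theorem.
-/

open Complex

/-- The Pochhammer symbol `(u)_n = ∏_{j=0}^{n-1} (u+j)` for complex `u`. -/
noncomputable def cpoch (u : ℂ) (n : ℕ) : ℂ := ∏ j ∈ Finset.range n, (u + (j : ℂ))

/-- The Gauss hypergeometric series `₂F₁(a,b;c;ξ)`. -/
noncomputable def hyp2F1 (a b c ξ : ℂ) : ℂ :=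
  ∑' n : ℕ, cpoch a n * cpoch b n / (cpoch c n * (n.factorial : ℂ)) * ξ ^ n

/-- The digamma function `ψ = Γ'/Γ`. -/
noncomputable def cdigamma (z : ℂ) : ℂ := deriv Complex.Gamma z / Complex.Gamma z

/-- The Euler–Mascheroni constant, `γ_E = -ψ(1)`. -/
noncomputable def eulerGammaC : ℂ := -cdigamma 1

/-- The logarithmic solution `w_{2,1}^{ln}` of the hypergeometric equation with `c = a+b`
at the endpoint `ξ = 1`. -/
noncomputable def w21ln (a b : ℂ) (ξ : ℝ) : ℂ :=
  hyp2F1 a b 1 ((1 - ξ : ℝ) : ℂ) * ((Real.log (1 - ξ) : ℝ) : ℂ) +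
    ∑' n : ℕ,
      cpoch a (n + 1) * cpoch b (n + 1) / (((n + 1).factorial : ℂ)) ^ 2 *
          (((1 - ξ : ℝ) : ℂ)) ^ (n + 1) *
        (cdigamma (a + ((n : ℂ) + 1)) - cdigamma a + cdigamma (b + ((n : ℂ) + 1)) -
          cdigamma b - 2 * cdigamma ((n : ℂ) + 2) - 2 * eulerGammaC)

open Filter Topology

/-! ### Partial fractions of the digamma function -/

lemma eulerGammaC_eq : eulerGammaC = (Real.eulerMascheroniConstant : ℂ) := by
  have := Complex.digamma_one
  rw [Complex.digamma_def, logDeriv_apply] at this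
  rw [eulerGammaC, cdigamma, this, neg_neg]

lemma norm_weierstrass_factor_sub_one_le {w : ℂ} (hw : ‖w‖ ≤ 1) :
    ‖(1 + w) * exp (-w) - 1‖ ≤ 3 * ‖w‖ ^ 2 := by
  have h1 : ‖exp (-w) - 1 - (-w)‖ ≤ ‖w‖ ^ 2 := by
    simpa using Complex.norm_exp_sub_one_sub_id_le (x := -w) (by simpa using hw)
  have h2 : (1 + w) * exp (-w) - 1 = -w ^ 2 + (1 + w) * (exp (-w) - 1 - (-w)) := by ring
  rw [h2]
  have h3 : ‖1 + w‖ ≤ 2 := by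
    calc ‖1 + w‖ ≤ ‖(1 : ℂ)‖ + ‖w‖ := norm_add_le _ _
      _ ≤ 2 := by rw [norm_one]; linarith
  calc ‖-w ^ 2 + (1 + w) * (exp (-w) - 1 - (-w))‖
      ≤ ‖-w ^ 2‖ + ‖(1 + w) * (exp (-w) - 1 - (-w))‖ := norm_add_le _ _
    _ ≤ ‖w‖ ^ 2 + 2 * ‖w‖ ^ 2 := by
        rw [norm_neg, norm_pow, norm_mul]; gcongr
    _ = _ := by ring

/-- The Weierstrass product `∏ (1 + z/n) e^(-z/n) = e^(-γz) / Γ(z+1)`, in partial products. The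
factors are written as `1 + (… - 1)` to match the API for products of the form `∏ (1 + fₙ)`. -/
lemma tendsto_weierstrass_prod (z : ℂ) :
    Tendsto (fun N : ℕ => ∏ n ∈ Finset.range N,
        (1 + ((1 + z / (n + 1)) * exp (-(z / (n + 1))) - 1))) atTop
      (𝓝 (exp (-(eulerGammaC * z)) * (Gamma (z + 1))⁻¹)) := by
  have hG : Tendsto (fun N : ℕ => (GammaSeq (z + 1) N)⁻¹) atTop (𝓝 (Gamma (z + 1))⁻¹) := by
    by_cases h0 : Gamma (z + 1) = 0
    -- At a pole of `Γ` the sequence is eventually `0⁻¹`, because its denominator vanishes.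
    · rw [h0]
      obtain ⟨m, hm⟩ := (Complex.Gamma_eq_zero_iff _).1 h0
      refine tendsto_const_nhds.congr' ?_
      filter_upwards [eventually_ge_atTop m] with N hN
      have : ∏ j ∈ Finset.range (N + 1), (z + 1 + (j : ℂ)) = 0 :=
        Finset.prod_eq_zero (i := m) (by simp; omega) (by rw [hm]; ring)
      simp [GammaSeq, this]
    · exact (GammaSeq_tendsto_Gamma (z + 1)).inv₀ h0
  have hγ : Tendsto (fun N : ℕ => exp (-(((harmonic N - Real.log N : ℝ) : ℂ) * z))) atTop
      (𝓝 (exp (-(eulerGammaC * z)))) := by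
    rw [eulerGammaC_eq]
    exact (continuous_exp.tendsto _).comp ((((continuous_ofReal.tendsto _).comp
      Real.tendsto_harmonic_sub_log).mul_const z).neg)
  have hr : Tendsto (fun N : ℕ => ((N : ℂ) / ((N : ℂ) + (z + 1)))) atTop (𝓝 1) :=
    tendsto_natCast_div_add_atTop (z + 1)
  have key := (hγ.mul hG).mul hr
  rw [mul_one] at key
  refine key.congr' ?_
  obtain ⟨M, hM⟩ := exists_nat_gt ‖z + 1‖
  filter_upwards [eventually_ge_atTop (M + 1)] with N hN
  have hN0 : (N : ℂ) ≠ 0 := by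
    have : N ≠ 0 := by omega
    exact_mod_cast this
  have hz : (N : ℂ) + (z + 1) ≠ 0 := by
    intro h
    have h2 : z + 1 = -(N : ℂ) := by linear_combination h
    have h3 : ‖z + 1‖ = N := by rw [h2]; simp
    have h4 : (M : ℝ) + 1 ≤ N := by exact_mod_cast hN
    linarith
  have hf : (N.factorial : ℂ) ≠ 0 := by exact_mod_cast N.factorial_ne_zero
  have e1 : ∏ n ∈ Finset.range N, (1 + ((1 + z / (n + 1)) * exp (-(z / (n + 1))) - 1))
      = (∏ n ∈ Finset.range N, (z + 1 + (n : ℂ))) / (N.factorial : ℂ)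
        * exp (-((harmonic N : ℂ) * z)) := by
    clear hN hN0 hz hf
    induction N with
    | zero => simp
    | succ N ih =>
      rw [Finset.prod_range_succ, ih, Finset.prod_range_succ, harmonic_succ, Nat.factorial_succ]
      push_cast
      rw [show -(((harmonic N : ℂ) + ((N : ℂ) + 1)⁻¹) * z) =
        -((harmonic N : ℂ) * z) + -(z / ((N : ℂ) + 1)) by ring, exp_add]
      have : (N : ℂ) + 1 ≠ 0 := by exact_mod_cast N.succ_ne_zero
      have hf : (N.factorial : ℂ) ≠ 0 := by exact_mod_cast N.factorial_ne_zero
      field_simp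
      ring
  rw [e1, GammaSeq, Finset.prod_range_succ, cpow_add _ _ hN0, cpow_one,
    cpow_def_of_ne_zero hN0]
  push_cast
  rw [show -(((harmonic N : ℂ) - log N) * z) =
    -((harmonic N : ℂ) * z) + log N * z by ring, exp_add]
  have he := exp_ne_zero (log (N : ℂ) * z)
  have hz' : z + 1 + (N : ℂ) ≠ 0 := by rwa [add_comm]
  field_simp
  ring

/-- The logarithmic derivative of the Weierstrass product at `x`. -/
lemma tendsto_digamma_aux (x : ℂ) (hx : ∀ m : ℕ, x + 1 ≠ -(m : ℂ)) :
    Tendsto (fun N : ℕ => ∑ n ∈ Finset.range N, (1 / (x + 1 + (n : ℂ)) - 1 / ((n : ℂ) + 1))) atTop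
      (𝓝 (-(cdigamma (x + 1) + eulerGammaC))) := by
  set R : ℝ := ‖x‖ + 1
  have hR : 0 < R := by positivity
  set K : Set ℂ := Metric.ball 0 R
  have hxK : x ∈ K := by simp [K, R]
  have hu : Summable (fun n : ℕ => 3 * (R / ((n : ℝ) + 1)) ^ 2) := by
    have := (summable_nat_add_iff 1).2 (Real.summable_one_div_nat_pow.2 one_lt_two)
    refine (this.mul_left (3 * R ^ 2)).congr fun n => ?_
    push_cast
    field_simp
  have hP := Summable.hasProdLocallyUniformlyOn_nat_one_add (K := K)
    (f := fun (n : ℕ) (z : ℂ) => (1 + z / (n + 1)) * exp (-(z / (n + 1))) - 1)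
    Metric.isOpen_ball hu (by
      obtain ⟨M, hM⟩ := exists_nat_gt R
      filter_upwards [eventually_ge_atTop M] with n hn z hz
      have hz' : ‖z‖ ≤ R := by simpa [K] using (Metric.mem_ball.1 hz).le
      have hnM : (M : ℝ) ≤ n := by exact_mod_cast hn
      have hw : ‖z / ((n : ℂ) + 1)‖ ≤ R / ((n : ℝ) + 1) := by
        rw [norm_div]
        have : ‖(n : ℂ) + 1‖ = (n : ℝ) + 1 := by
          have := Complex.norm_natCast (n + 1)
          push_cast at this
          exact this
        rw [this]
        gcongr
      have hw1 : ‖z / ((n : ℂ) + 1)‖ ≤ 1 := hw.trans (by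
        rw [div_le_one (by positivity)]; linarith)
      calc _ ≤ _ := norm_weierstrass_factor_sub_one_le hw1
        _ ≤ _ := by gcongr) (fun n => by fun_prop)
  have hT := hP.tendstoLocallyUniformlyOn_finsetRange
  have hlim : Set.EqOn (fun z => ∏' n : ℕ, (1 + ((1 + z / ((n : ℂ) + 1)) *
      exp (-(z / ((n : ℂ) + 1))) - 1)))
      (fun z => exp (-(eulerGammaC * z)) * (Gamma (z + 1))⁻¹) K := by
    intro z hz
    refine tendsto_nhds_unique (hT.tendsto_at hz) (tendsto_weierstrass_prod z)
  have hT2 := hT.congr_right hlim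
  have hΓ : Gamma (x + 1) ≠ 0 := Gamma_ne_zero hx
  have hL := logDeriv_tendsto Metric.isOpen_ball hxK hT2
    (Eventually.of_forall fun N => by fun_prop) (by
      exact mul_ne_zero (exp_ne_zero _) (inv_ne_zero hΓ))
  have hΓd : HasDerivAt (fun z : ℂ => Gamma (z + 1)) (deriv Gamma (x + 1)) x :=
    (differentiableAt_Gamma _ hx).hasDerivAt.comp_add_const x 1
  have e : logDeriv (fun z => exp (-(eulerGammaC * z)) * (Gamma (z + 1))⁻¹) x =
      -(cdigamma (x + 1) + eulerGammaC) := by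
    have h1 : HasDerivAt (fun z : ℂ => exp (-(eulerGammaC * z)))
        (exp (-(eulerGammaC * x)) * (-(eulerGammaC * 1))) x :=
      (((hasDerivAt_id x).const_mul eulerGammaC).neg).cexp
    rw [logDeriv_apply, (h1.fun_mul (hΓd.fun_inv hΓ)).deriv, cdigamma]
    have := exp_ne_zero (-(eulerGammaC * x))
    field_simp
    ring
  rw [e] at hL
  refine hL.congr fun N => ?_
  have hne : ∀ n : ℕ, x + 1 + (n : ℂ) ≠ 0 := fun n h => hx n (by linear_combination h)
  have hn1 : ∀ n : ℕ, (n : ℂ) + 1 ≠ 0 := fun n => by exact_mod_cast n.succ_ne_zero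
  have hfac : ∀ n : ℕ, 1 + x / ((n : ℂ) + 1) ≠ 0 := fun n h => hne n (by
    have := hn1 n
    field_simp at h
    linear_combination h)
  rw [logDeriv_prod]
  · refine Finset.sum_congr rfl fun n _ => ?_
    have h1 : HasDerivAt (fun z : ℂ => 1 + ((1 + z / ((n : ℂ) + 1)) *
        exp (-(z / ((n : ℂ) + 1))) - 1))
        (1 / ((n : ℂ) + 1) * exp (-(x / ((n : ℂ) + 1))) + (1 + x / ((n : ℂ) + 1)) *
          (exp (-(x / ((n : ℂ) + 1))) * -(1 / ((n : ℂ) + 1)))) x := by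
      have hd : HasDerivAt (fun z : ℂ => z / ((n : ℂ) + 1)) (1 / ((n : ℂ) + 1)) x :=
        (hasDerivAt_id x).div_const _
      exact (((hd.const_add 1).fun_mul hd.neg.cexp).sub_const 1).const_add 1
    rw [logDeriv_apply, h1.deriv, add_sub_cancel]
    have := exp_ne_zero (-(x / ((n : ℂ) + 1)))
    have := hne n
    have := hn1 n
    have := hfac n
    have h5 : 1 + x / ((n : ℂ) + 1) = (x + 1 + n) / ((n : ℂ) + 1) := by field_simp; ring
    rw [h5]
    field_simp
    ring
  · intro n _
    rw [add_sub_cancel]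
    exact mul_ne_zero (hfac n) (exp_ne_zero _)
  · intro n _
    fun_prop

/-- The partial fraction series `ψ(z) + γ = ∑ (1/(n+1) - 1/(z+n))`. -/
lemma tendsto_digamma (z : ℂ) (hz : ∀ m : ℕ, z ≠ -(m : ℂ)) :
    Tendsto (fun N : ℕ => ∑ n ∈ Finset.range N, (1 / (z + (n : ℂ)) - 1 / ((n : ℂ) + 1))) atTop
      (𝓝 (-(cdigamma z + eulerGammaC))) := by
  have := tendsto_digamma_aux (z - 1) (by simpa using hz)
  simpa using this

lemma cdigamma_add_one (z : ℂ) (hz : ∀ m : ℕ, z ≠ -(m : ℂ)) :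
    cdigamma (z + 1) = cdigamma z + 1 / z := by
  have := Complex.digamma_apply_add_one z hz
  rw [Complex.digamma_def, logDeriv_apply, logDeriv_apply] at this
  rw [cdigamma, cdigamma, this, one_div]

/-! ### The regularised sum of the zero-balanced series -/

/-- `z` is not a pole of the Gamma function. -/
def NotPole (z : ℂ) : Prop := ∀ m : ℕ, z ≠ -(m : ℂ)

lemma NotPole.add_ne {z : ℂ} (hz : NotPole z) (n : ℕ) : z + n ≠ 0 :=
  fun h => hz n (by linear_combination h)

lemma NotPole.ne {z : ℂ} (hz : NotPole z) : z ≠ 0 := by simpa using hz.add_ne 0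

lemma NotPole.add_nat {z : ℂ} (hz : NotPole z) (n : ℕ) : NotPole (z + n) := fun m h =>
  hz (n + m) (by push_cast; linear_combination h)

lemma NotPole.add_one {z : ℂ} (hz : NotPole z) : NotPole (z + 1) := by
  simpa using hz.add_nat 1

lemma NotPole.Gamma_ne {z : ℂ} (hz : NotPole z) : Gamma z ≠ 0 := Gamma_ne_zero hz

lemma NotPole.Gamma_add_ne {z : ℂ} (hz : NotPole z) (n : ℕ) : Gamma (z + n) ≠ 0 :=
  (hz.add_nat n).Gamma_ne

lemma notPole_of_re_pos {z : ℂ} (hz : 0 < z.re) : NotPole z := by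
  intro m h
  rw [h] at hz
  simp at hz
  linarith [(Nat.cast_nonneg m : (0 : ℝ) ≤ m)]

lemma Gamma_add_succ {z : ℂ} (hz : NotPole z) (n : ℕ) :
    Gamma (z + ((n + 1 : ℕ) : ℂ)) = (z + n) * Gamma (z + n) := by
  rw [← Gamma_add_one _ (hz.add_ne n)]
  push_cast
  ring_nf

/-- `1/(z+n) = O(1/(n+1))`. -/
lemma NotPole.exists_bound {z : ℂ} (hz : NotPole z) :
    ∃ C : ℝ, 0 < C ∧ ∀ n : ℕ, ‖1 / (z + n)‖ ≤ C / ((n : ℝ) + 1) := by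
  have h1 : Tendsto (fun n : ℕ => (n : ℂ) / ((n : ℂ) + z)) atTop (𝓝 1) :=
    tendsto_natCast_div_add_atTop z
  have h2 : Tendsto (fun n : ℕ => 1 / (z + (n : ℂ))) atTop (𝓝 0) := by
    have h3 : Tendsto (fun n : ℕ => ((n : ℂ))⁻¹) atTop (𝓝 0) :=
      tendsto_inv_atTop_nhds_zero_nat (𝕜 := ℂ)
    have := h1.mul h3
    rw [mul_zero] at this
    refine this.congr' ?_
    filter_upwards [eventually_gt_atTop 0] with n hn
    have : (n : ℂ) ≠ 0 := by exact_mod_cast hn.ne'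
    have := hz.add_ne n
    have h' : (n : ℂ) + z ≠ 0 := by rwa [add_comm]
    field_simp
    ring
  obtain ⟨C, hC⟩ := (h1.add h2).norm.bddAbove_range
  refine ⟨|C| + 1, by positivity, fun n => ?_⟩
  have hCn := hC ⟨n, rfl⟩
  simp only at hCn
  have hn1 : ‖(n : ℂ) + 1‖ = (n : ℝ) + 1 := by
    have := Complex.norm_natCast (n + 1)
    push_cast at this
    exact this
  have e : (n : ℂ) / ((n : ℂ) + z) + 1 / (z + n) = ((n : ℂ) + 1) * (1 / (z + n)) := by
    rw [add_comm (n : ℂ) z]; ring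
  rw [e, norm_mul, hn1] at hCn
  rw [le_div_iff₀ (by positivity)]
  linarith [le_abs_self C]

/-- The coefficients `Γ(a+n)Γ(b+n) / (Γ(a+b+n) n!)` of the zero-balanced hypergeometric series
`₂F₁(a,b;a+b;ξ)`, normalised so that they are asymptotic to `1/n`. -/
noncomputable def zbCoeff (a b : ℂ) (n : ℕ) : ℂ :=
  Gamma (a + n) * Gamma (b + n) / (Gamma (a + b + n) * (n.factorial : ℂ))

lemma zbCoeff_comm (a b : ℂ) (n : ℕ) : zbCoeff a b n = zbCoeff b a n := by
  rw [zbCoeff, zbCoeff, add_comm a b, mul_comm (Gamma (a + n))]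

lemma zbCoeff_succ {a b : ℂ} (ha : NotPole a) (hb : NotPole b) (hab : NotPole (a + b)) (n : ℕ) :
    zbCoeff a b (n + 1) = zbCoeff a b n * ((a + n) * (b + n) / ((a + b + n) * (n + 1))) := by
  rw [zbCoeff, zbCoeff, Gamma_add_succ ha, Gamma_add_succ hb, Gamma_add_succ hab,
    Nat.factorial_succ]
  have := hab.add_ne n
  have := hab.Gamma_add_ne n
  have : (n : ℂ) + 1 ≠ 0 := by exact_mod_cast n.succ_ne_zero
  have hf : (n.factorial : ℂ) ≠ 0 := by exact_mod_cast n.factorial_ne_zero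
  push_cast
  field_simp

lemma zbCoeff_add_one {a b : ℂ} (ha : NotPole a) (hab : NotPole (a + b)) (n : ℕ) :
    zbCoeff (a + 1) b n = zbCoeff a b n * ((a + n) / (a + b + n)) := by
  have h1 := Gamma_add_succ ha n
  have h2 := Gamma_add_succ hab n
  push_cast at h1 h2
  rw [zbCoeff, zbCoeff, show a + 1 + (n : ℂ) = a + (n + 1) by ring,
    show a + 1 + b + (n : ℂ) = a + b + (n + 1) by ring, h1, h2]
  have := hab.add_ne n
  have := hab.Gamma_add_ne n
  have hf : (n.factorial : ℂ) ≠ 0 := by exact_mod_cast n.factorial_ne_zero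
  field_simp

/-- Raising `a` by one changes the terms by a telescoping amount. -/
lemma sum_zbCoeff_add_one {a b : ℂ} (ha : NotPole a) (hb : NotPole b) (hab : NotPole (a + b))
    (N : ℕ) : ∑ n ∈ Finset.range N, zbCoeff (a + 1) b n =
      ∑ n ∈ Finset.range N, zbCoeff a b n - 1 / a * (N * zbCoeff a b N) := by
  induction N with
  | zero => simp
  | succ N ih =>
    rw [Finset.sum_range_succ, ih, Finset.sum_range_succ, zbCoeff_add_one ha hab,
      zbCoeff_succ ha hb hab]
    have := hab.add_ne N
    have := ha.ne
    have : (N : ℂ) + 1 ≠ 0 := by exact_mod_cast N.succ_ne_zero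
    push_cast
    field_simp
    ring

/-- Raising `a` by `m`; for large `N` each correction term is close to `1/(a+j)`. -/
lemma sum_zbCoeff_add_nat {a b : ℂ} (ha : NotPole a) (hb : NotPole b) (hab : NotPole (a + b))
    (N m : ℕ) : ∑ n ∈ Finset.range N, zbCoeff (a + m) b n =
      ∑ n ∈ Finset.range N, zbCoeff a b n -
        ∑ j ∈ Finset.range m, 1 / (a + j) * (N * zbCoeff (a + j) b N) := by
  induction m with
  | zero => simp
  | succ m ih =>
    have h := sum_zbCoeff_add_one (ha.add_nat m) hb
      (by simpa [add_right_comm] using hab.add_nat m) N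
    rw [Finset.sum_range_succ, ← sub_sub, ← ih, ← h]
    push_cast
    rw [add_assoc]

/-- Euler's sequence for `Γ(z)`, with its product written as a quotient of Gamma values. -/
lemma GammaSeq_eq {z : ℂ} (hz : NotPole z) (n : ℕ) :
    GammaSeq z n = (n : ℂ) ^ z * (n.factorial : ℂ) * Gamma z / Gamma (z + ((n + 1 : ℕ) : ℂ)) := by
  have h : ∀ N : ℕ, (∏ j ∈ Finset.range N, (z + (j : ℂ))) * Gamma z = Gamma (z + N) := by
    intro N
    induction N with
    | zero => simp
    | succ N ih => rw [Gamma_add_succ hz, ← ih, Finset.prod_range_succ]; ring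
  have hp : ∏ j ∈ Finset.range (n + 1), (z + (j : ℂ)) ≠ 0 :=
    Finset.prod_ne_zero_iff.2 fun j _ => hz.add_ne j
  rw [GammaSeq, ← h]
  have := hz.Gamma_ne
  field_simp

/-- The coefficients are asymptotic to `1/n`, by Euler's limit formula for `Γ`. -/
lemma tendsto_nat_mul_zbCoeff {a b : ℂ} (ha : NotPole a) (hb : NotPole b) (hab : NotPole (a + b)) :
    Tendsto (fun N : ℕ => (N : ℂ) * zbCoeff a b N) atTop (𝓝 1) := by
  rw [← tendsto_add_atTop_iff_nat 1]
  have h := (((GammaSeq_tendsto_Gamma (a + b)).div ((GammaSeq_tendsto_Gamma a).mul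
    (GammaSeq_tendsto_Gamma b)) (mul_ne_zero ha.Gamma_ne hb.Gamma_ne)).mul_const
    (Gamma a * Gamma b / Gamma (a + b)))
  have h1 := ha.Gamma_ne
  have h2 := hb.Gamma_ne
  have h3 := hab.Gamma_ne
  rw [show Gamma (a + b) / (Gamma a * Gamma b) * (Gamma a * Gamma b / Gamma (a + b)) = 1 by
    field_simp] at h
  refine h.congr' ?_
  filter_upwards [eventually_gt_atTop 0] with n hn
  have hn0 : (n : ℂ) ≠ 0 := by exact_mod_cast hn.ne'
  simp only [Pi.div_apply]
  rw [GammaSeq_eq ha, GammaSeq_eq hb, GammaSeq_eq hab, cpow_add _ _ hn0, zbCoeff,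
    Nat.factorial_succ]
  have := ha.Gamma_add_ne (n + 1)
  have := hb.Gamma_add_ne (n + 1)
  have := hab.Gamma_add_ne (n + 1)
  have : (n : ℂ) ^ a ≠ 0 := by simp [cpow_eq_zero_iff, hn0]
  have : (n : ℂ) ^ b ≠ 0 := by simp [cpow_eq_zero_iff, hn0]
  have : (n : ℂ) + 1 ≠ 0 := by exact_mod_cast n.succ_ne_zero
  have hf : (n.factorial : ℂ) ≠ 0 := by exact_mod_cast n.factorial_ne_zero
  push_cast at *
  field_simp

lemma inv_sq_le_telescope (j : ℕ) :
    1 / ((j : ℝ) + 1) ^ 2 ≤ 2 * (1 / ((j : ℝ) + 1) - 1 / ((j : ℝ) + 2)) := by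
  have e : 2 * (1 / ((j : ℝ) + 1) - 1 / ((j : ℝ) + 2)) = 2 / (((j : ℝ) + 1) * (j + 2)) := by
    field_simp; ring
  rw [e, div_le_div_iff₀ (by positivity) (by positivity)]
  nlinarith [(Nat.cast_nonneg j : (0 : ℝ) ≤ j)]

/-- `Γ(a+k)Γ(b+1+k) / (Γ(a+b+k) k!) = 1 + O(1/k)`. -/
lemma exists_bound_zbCoeff {a b : ℂ} (ha : NotPole a) (hb : NotPole b) (hab : NotPole (a + b)) :
    ∃ C : ℝ, 0 ≤ C ∧ ∀ k : ℕ, ‖zbCoeff a b k * (b + k) - 1‖ ≤ C / ((k : ℝ) + 1) := by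
  set ρ : ℕ → ℂ := fun k => zbCoeff a b k * (b + k) with hρ
  have hlim : Tendsto ρ atTop (𝓝 1) := by
    have h1 := tendsto_nat_mul_zbCoeff ha hb hab
    have h2 : Tendsto (fun n : ℕ => 1 + b * ((n : ℂ))⁻¹) atTop (𝓝 1) := by
      simpa using ((tendsto_inv_atTop_nhds_zero_nat (𝕜 := ℂ)).const_mul b).const_add 1
    have := h1.mul h2
    rw [mul_one] at this
    refine this.congr' ?_
    filter_upwards [eventually_gt_atTop 0] with n hn
    have hn0 : (n : ℂ) ≠ 0 := by exact_mod_cast hn.ne'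
    simp only [hρ]
    field_simp
    ring
  obtain ⟨M, hM⟩ := hlim.norm.bddAbove_range
  obtain ⟨c, hc, hcb⟩ := hab.exists_bound
  set C := |M| * ‖b * (a - 1)‖ * c
  have hstep : ∀ k : ℕ, ‖ρ (k + 1) - ρ k‖ ≤ C / ((k : ℝ) + 1) ^ 2 := by
    intro k
    have hk : (k : ℂ) + 1 ≠ 0 := by exact_mod_cast k.succ_ne_zero
    have hk' : ‖(k : ℂ) + 1‖ = (k : ℝ) + 1 := by
      have := Complex.norm_natCast (k + 1)
      push_cast at this
      exact this
    have := hab.add_ne k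
    have e : ρ (k + 1) - ρ k = ρ k * (b * (a - 1)) * (1 / (a + b + k)) * (1 / ((k : ℂ) + 1)) := by
      simp only [hρ, zbCoeff_succ ha hb hab]
      push_cast
      field_simp
      ring
    have hMk : ‖ρ k‖ ≤ |M| := (hM ⟨k, rfl⟩).trans (le_abs_self M)
    rw [e, norm_mul, norm_mul, norm_mul, norm_div 1 ((k : ℂ) + 1), hk', norm_one]
    calc _ ≤ |M| * ‖b * (a - 1)‖ * (c / ((k : ℝ) + 1)) * (1 / ((k : ℝ) + 1)) := by
          gcongr
          exact hcb k
      _ = _ := by simp only [C]; field_simp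
  have hC : 0 ≤ C := by positivity
  refine ⟨2 * C, by positivity, fun k => ?_⟩
  have hfin : ∀ m : ℕ, ‖ρ k - ρ (m + k)‖ ≤ 2 * C * (1 / ((k : ℝ) + 1) - 1 / ((m : ℝ) + k + 1)) := by
    intro m
    induction m with
    | zero => simp
    | succ m ih =>
      have h1 := hstep (m + k)
      have h2 := inv_sq_le_telescope (m + k)
      have e : ρ k - ρ (m + 1 + k) = (ρ k - ρ (m + k)) - (ρ (m + k + 1) - ρ (m + k)) := by
        rw [show m + 1 + k = m + k + 1 by ring]; ring
      rw [e]
      refine (norm_sub_le _ _).trans ?_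
      push_cast at h1 h2 ⊢
      have h3 : C / ((m : ℝ) + k + 1) ^ 2 ≤
          C * (2 * (1 / ((m : ℝ) + k + 1) - 1 / ((m : ℝ) + k + 2))) := by
        rw [div_eq_mul_one_div]; gcongr
      have e2 : (m : ℝ) + 1 + k + 1 = m + k + 2 := by ring
      rw [e2]
      linarith
  have hfin' : ∀ m : ℕ, ‖ρ k - ρ (m + k)‖ ≤ 2 * C / ((k : ℝ) + 1) := fun m => by
    refine (hfin m).trans ?_
    rw [div_eq_mul_one_div (2 * C)]
    gcongr
    have : 0 ≤ 1 / ((m : ℝ) + k + 1) := by positivity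
    linarith
  have hl : Tendsto (fun m : ℕ => ‖ρ k - ρ (m + k)‖) atTop (𝓝 ‖ρ k - 1‖) :=
    (((tendsto_add_atTop_iff_nat k).2 hlim).const_sub (ρ k)).norm
  exact le_of_tendsto' hl hfin'

lemma zbCoeff_one {b : ℂ} (hb : NotPole b) (n : ℕ) : zbCoeff 1 b n = 1 / (b + n) := by
  have h1 := Gamma_add_succ hb n
  push_cast at h1
  rw [zbCoeff, show (1 : ℂ) + b + n = b + (n + 1) by ring, h1, add_comm (1 : ℂ) (n : ℂ),
    Gamma_nat_eq_factorial]
  have := hb.add_ne n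
  have := hb.Gamma_add_ne n
  have hf : (n.factorial : ℂ) ≠ 0 := by exact_mod_cast n.factorial_ne_zero
  field_simp

lemma notPole_one : NotPole 1 := notPole_of_re_pos (by simp)

/-- An explicit bound for the coefficients with first parameter `1 + m`, by induction on `m`; the
condition `1 ≤ Re b` makes all constants equal to one. -/
lemma norm_zbCoeff_one_add_le {b : ℂ} (hb : 1 ≤ b.re) (n m : ℕ) :
    ‖zbCoeff (1 + m) b n‖ ≤ 1 / ((n : ℝ) + m + 1) := by
  have hbN : NotPole b := notPole_of_re_pos (by linarith)
  have hre : ∀ k : ℕ, (k : ℝ) + 1 ≤ ‖b + k‖ := fun k => by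
    refine le_trans ?_ (Complex.re_le_norm _)
    simp; linarith
  induction m with
  | zero =>
    have := zbCoeff_one hbN n
    simp only [Nat.cast_zero, add_zero]
    rw [this, norm_div, norm_one]
    gcongr
    exact hre n
  | succ m ih =>
    have h1 : NotPole (1 + (m : ℂ)) := notPole_one.add_nat m
    have h2 : NotPole (1 + (m : ℂ) + b) := notPole_of_re_pos (by simp; positivity)
    have h := zbCoeff_add_one h1 h2 n
    push_cast
    rw [← add_assoc, h, norm_mul, norm_div]
    have e1 : ‖(1 : ℂ) + m + n‖ = (n : ℝ) + m + 1 := by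
      have := Complex.norm_natCast (n + m + 1)
      push_cast at this
      rw [← this]; ring_nf
    have e2 : (n : ℝ) + (m + 1) + 1 ≤ ‖1 + (m : ℂ) + b + n‖ := by
      have := hre (n + m + 1)
      push_cast at this
      rw [show 1 + (m : ℂ) + b + n = b + (n + m + 1) by ring]
      linarith
    rw [e1]
    calc _ ≤ 1 / ((n : ℝ) + m + 1) * (((n : ℝ) + m + 1) / ((n : ℝ) + (m + 1) + 1)) := by gcongr
      _ = _ := by field_simp

/-- After a shift by `m`, the coefficients for `a` are those for `1` times a factor that is
`1 + O(1/(n+m))` by `exists_bound_zbCoeff`. -/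
lemma zbCoeff_add_nat {a b : ℂ} (hb : NotPole b) (hab : NotPole (a + b)) (n m : ℕ) :
    zbCoeff (a + m) b n = zbCoeff (1 + m) b n * (zbCoeff a b (n + m) * (b + (n + m : ℕ))) := by
  have h0 := Gamma_add_succ hb (n + m)
  simp only [zbCoeff]
  push_cast at *
  rw [show a + (m : ℂ) + n = a + (n + m) by ring, show a + (m : ℂ) + b + n = a + b + (n + m) by ring,
    show 1 + (m : ℂ) + b + n = b + (n + m + 1) by ring, h0,
    show 1 + (m : ℂ) + n = ((n + m : ℕ) : ℂ) + 1 by push_cast; ring, Gamma_nat_eq_factorial]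
  have h1 := hab.Gamma_add_ne (n + m)
  have h2 := hb.Gamma_add_ne (n + m)
  have h3 := hb.add_ne (n + m)
  push_cast at h1 h2 h3
  have hf : (n.factorial : ℂ) ≠ 0 := by exact_mod_cast n.factorial_ne_zero
  have hf : ((n + m).factorial : ℂ) ≠ 0 := by exact_mod_cast (n + m).factorial_ne_zero
  field_simp

/-- After a shift by `m`, the partial sums for `a` and for `1` differ by `O(1/m)`, uniformly in
their length. -/
lemma sum_zbCoeff_shift_le {a b : ℂ} (ha : NotPole a) (hb : 1 ≤ b.re) (hab : NotPole (a + b)) :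
    ∃ C : ℝ, 0 ≤ C ∧ ∀ N m : ℕ, ‖∑ n ∈ Finset.range N, zbCoeff (a + m) b n -
      ∑ n ∈ Finset.range N, zbCoeff (1 + m) b n‖ ≤ C / ((m : ℝ) + 1) := by
  have hbN : NotPole b := notPole_of_re_pos (by linarith)
  obtain ⟨C, hC, hCb⟩ := exists_bound_zbCoeff ha hbN hab
  refine ⟨2 * C, by positivity, fun N m => ?_⟩
  have hterm : ∀ n : ℕ, ‖zbCoeff (a + m) b n - zbCoeff (1 + m) b n‖ ≤
      2 * C * (1 / ((m : ℝ) + n + 1) - 1 / ((m : ℝ) + (n + 1 : ℕ) + 1)) := by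
    intro n
    rw [zbCoeff_add_nat hbN hab, ← mul_sub_one, norm_mul]
    have h1 := norm_zbCoeff_one_add_le hb n m
    have h2 := hCb (n + m)
    have h3 := inv_sq_le_telescope (n + m)
    push_cast at *
    calc _ ≤ 1 / ((n : ℝ) + m + 1) * (C / ((n : ℝ) + m + 1)) := by gcongr
      _ = C * (1 / ((n : ℝ) + m + 1) ^ 2) := by field_simp
      _ ≤ C * (2 * (1 / ((n : ℝ) + m + 1) - 1 / ((n : ℝ) + m + 2))) := by gcongr
      _ = _ := by
        rw [show (n : ℝ) + m + 2 = m + (n + 1) + 1 by ring,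
          show (n : ℝ) + m + 1 = m + n + 1 by ring]; ring
  rw [← Finset.sum_sub_distrib]
  refine (norm_sum_le _ _).trans ((Finset.sum_le_sum fun n _ => hterm n).trans ?_)
  rw [← Finset.mul_sum, Finset.sum_range_sub' (fun n : ℕ => 1 / ((m : ℝ) + n + 1)),
    div_eq_mul_one_div (2 * C)]
  gcongr
  have : 0 ≤ 1 / ((m : ℝ) + N + 1) := by positivity
  simp only [Nat.cast_zero, add_zero]
  linarith

/-- Comparison with `a = 1`: first `N → ∞` at a fixed shift `m`, then `m → ∞`. -/
lemma tendsto_sum_zbCoeff_sub {a b : ℂ} (ha : NotPole a) (hb : 1 ≤ b.re) (hab : NotPole (a + b)) :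
    Tendsto (fun N : ℕ => ∑ n ∈ Finset.range N, zbCoeff a b n -
      ∑ n ∈ Finset.range N, zbCoeff 1 b n) atTop (𝓝 (-(cdigamma a + eulerGammaC))) := by
  have hbN : NotPole b := notPole_of_re_pos (by linarith)
  have h1b : NotPole (1 + b) := notPole_of_re_pos (by simp; linarith)
  obtain ⟨C, hC, hCb⟩ := sum_zbCoeff_shift_le ha hb hab
  have hψ := tendsto_digamma a ha
  rw [Metric.tendsto_atTop] at hψ ⊢
  intro ε hε
  obtain ⟨M₁, hM₁⟩ := hψ (ε / 3) (by positivity)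
  obtain ⟨M₂, hM₂⟩ := exists_nat_gt (C / (ε / 3))
  set m := max M₁ M₂
  have hm1 := hM₁ m (le_max_left _ _)
  have hm2 : C / ((m : ℝ) + 1) < ε / 3 := by
    have : (M₂ : ℝ) ≤ m := by exact_mod_cast le_max_right M₁ M₂
    rw [div_lt_iff₀ (by positivity)] at hM₂ ⊢
    nlinarith
  have hY : Tendsto (fun N : ℕ => ∑ j ∈ Finset.range m,
      (1 / (a + j) * (N * zbCoeff (a + j) b N) - 1 / (1 + j) * (N * zbCoeff (1 + j) b N))) atTop
      (𝓝 (∑ j ∈ Finset.range m, (1 / (a + j) - 1 / ((j : ℂ) + 1)))) := by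
    refine tendsto_finsetSum _ fun j _ => ?_
    have h1 := tendsto_nat_mul_zbCoeff (ha.add_nat j) hbN
      (by simpa [add_right_comm] using hab.add_nat j)
    have h2 := tendsto_nat_mul_zbCoeff (notPole_one.add_nat j) hbN
      (by simpa [add_right_comm] using h1b.add_nat j)
    simpa [add_comm] using (h1.const_mul (1 / (a + j))).sub (h2.const_mul (1 / (1 + (j : ℂ))))
  rw [Metric.tendsto_atTop] at hY
  obtain ⟨N₀, hN₀⟩ := hY (ε / 3) (by positivity)
  refine ⟨N₀, fun N hN => ?_⟩
  have h3 := hN₀ N hN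
  have h4 := hCb N m
  rw [sum_zbCoeff_add_nat ha hbN hab, sum_zbCoeff_add_nat notPole_one hbN h1b] at h4
  rw [Finset.sum_sub_distrib] at h3
  set p := ∑ n ∈ Finset.range N, zbCoeff a b n
  set q := ∑ n ∈ Finset.range N, zbCoeff 1 b n
  set y₁ := ∑ j ∈ Finset.range m, 1 / (a + (j : ℂ)) * (N * zbCoeff (a + j) b N)
  set y₂ := ∑ j ∈ Finset.range m, 1 / (1 + (j : ℂ)) * (N * zbCoeff (1 + j) b N)
  calc dist (p - q) (-(cdigamma a + eulerGammaC))
      ≤ dist (p - q) (y₁ - y₂) + dist (y₁ - y₂) _ := dist_triangle _ _ _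
    _ ≤ dist (p - q) (y₁ - y₂) + (dist (y₁ - y₂)
        (∑ j ∈ Finset.range m, (1 / (a + (j : ℂ)) - 1 / ((j : ℂ) + 1))) + dist _ _) := by
        gcongr; exact dist_triangle _ _ _
    _ < ε / 3 + (ε / 3 + ε / 3) := by
        gcongr
        rw [dist_eq_norm]
        refine lt_of_le_of_lt (le_of_eq ?_) (h4.trans_lt hm2)
        congr 1; ring
    _ = ε := by ring

lemma tendsto_sum_zbCoeff_of_re {a b : ℂ} (ha : NotPole a) (hb : 1 ≤ b.re)
    (hab : NotPole (a + b)) :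
    Tendsto (fun N : ℕ => ∑ n ∈ Finset.range N, (zbCoeff a b n - 1 / ((n : ℂ) + 1))) atTop
      (𝓝 (-(cdigamma a + cdigamma b + 2 * eulerGammaC))) := by
  have hbN : NotPole b := notPole_of_re_pos (by linarith)
  have h := (tendsto_sum_zbCoeff_sub ha hb hab).add (tendsto_digamma b hbN)
  rw [show -(cdigamma a + eulerGammaC) + -(cdigamma b + eulerGammaC) =
    -(cdigamma a + cdigamma b + 2 * eulerGammaC) by ring] at h
  refine h.congr fun N => ?_
  simp only [zbCoeff_one hbN, Finset.sum_sub_distrib]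
  ring

/-- The regularised sum of the zero-balanced series at `ξ = 1`; this is where the digamma
constants of the connection formula come from. -/
lemma tendsto_sum_zbCoeff {a b : ℂ} (ha : NotPole a) (hb : NotPole b) (hab : NotPole (a + b)) :
    Tendsto (fun N : ℕ => ∑ n ∈ Finset.range N, (zbCoeff a b n - 1 / ((n : ℂ) + 1))) atTop
      (𝓝 (-(cdigamma a + cdigamma b + 2 * eulerGammaC))) := by
  -- `b` is raised in steps of one until `1 ≤ Re b`.
  obtain ⟨M, hM⟩ := exists_nat_gt (1 - b.re)
  have key : ∀ M : ℕ, ∀ b : ℂ, NotPole b → NotPole (a + b) → 1 - b.re < M →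
      Tendsto (fun N : ℕ => ∑ n ∈ Finset.range N, (zbCoeff a b n - 1 / ((n : ℂ) + 1))) atTop
      (𝓝 (-(cdigamma a + cdigamma b + 2 * eulerGammaC))) := by
    intro M
    induction M with
    | zero =>
      intro b hb hab h
      exact tendsto_sum_zbCoeff_of_re ha (by simp at h; linarith) hab
    | succ M ih =>
      intro b hb hab h
      have h1 := ih (b + 1) hb.add_one (by simpa [add_assoc] using hab.add_one) (by
        push_cast at h; simp; linarith)
      have h2 := tendsto_nat_mul_zbCoeff ha hb hab
      have h3 := h1.add (h2.const_mul (1 / b))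
      rw [cdigamma_add_one b hb] at h3
      rw [show -(cdigamma a + (cdigamma b + 1 / b) + 2 * eulerGammaC) + 1 / b * 1 =
        -(cdigamma a + cdigamma b + 2 * eulerGammaC) by ring] at h3
      refine h3.congr fun N => ?_
      have h4 := sum_zbCoeff_add_one hb ha (by rwa [add_comm]) N
      simp only [Finset.sum_sub_distrib]
      simp only [zbCoeff_comm a]
      rw [h4]
      ring
  exact key M b hb hab hM

/-! ### Power series on the unit disc -/

/-- The power series `∑ cₙ xⁿ` converges absolutely on the open unit disc. -/
def DiscSummable (c : ℕ → ℂ) : Prop :=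
  ∀ r : ℝ, 0 ≤ r → r < 1 → Summable fun n => ‖c n‖ * r ^ n

/-- The sum of the power series with coefficients `c`. -/
noncomputable def pseries (c : ℕ → ℂ) (x : ℂ) : ℂ := ∑' n, c n * x ^ n

/-- The coefficients of the termwise derivative of a power series. -/
noncomputable def dcoeff (c : ℕ → ℂ) (n : ℕ) : ℂ := ((n : ℂ) + 1) * c (n + 1)

lemma DiscSummable.hasSum {c : ℕ → ℂ} (hc : DiscSummable c) {x : ℂ} (hx : ‖x‖ < 1) :
    HasSum (fun n => c n * x ^ n) (pseries c x) := by
  refine Summable.hasSum (Summable.of_norm ((hc ‖x‖ (norm_nonneg _) hx).congr fun n => ?_))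
  rw [norm_mul, norm_pow]

lemma norm_natCast_add_one (n : ℕ) : ‖(n : ℂ) + 1‖ = (n : ℝ) + 1 := by
  have := Complex.norm_natCast (n + 1)
  push_cast at this
  exact this

lemma DiscSummable.dcoeff {c : ℕ → ℂ} (hc : DiscSummable c) : DiscSummable (dcoeff c) := by
  intro r hr0 hr1
  set s := (r + 1) / 2 with hs
  have hs0 : 0 < s := by positivity
  have hrs : r < s := by rw [hs]; linarith
  have hs1 : s < 1 := by rw [hs]; linarith
  have hq0 : 0 ≤ r / s := by positivity
  have hq1 : r / s < 1 := by rwa [div_lt_one hs0]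
  have hlim : Tendsto (fun n : ℕ => (n : ℝ) * (r / s) ^ n + (r / s) ^ n) atTop (𝓝 (0 + 0)) :=
    (tendsto_self_mul_const_pow_of_lt_one hq0 hq1).add (tendsto_pow_atTop_nhds_zero_of_lt_one hq0 hq1)
  obtain ⟨C, hC⟩ := hlim.bddAbove_range
  have hsum := ((summable_nat_add_iff 1).2 (hc s hs0.le hs1)).mul_left (C / s)
  refine Summable.of_nonneg_of_le (fun n => by positivity) (fun n => ?_) hsum
  have hCn : (n : ℝ) * (r / s) ^ n + (r / s) ^ n ≤ C := hC ⟨n, rfl⟩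
  have e : r ^ n = (r / s) ^ n * s ^ n := by rw [← mul_pow, div_mul_cancel₀ _ hs0.ne']
  rw [_root_.dcoeff, norm_mul, norm_natCast_add_one, e]
  calc ((n : ℝ) + 1) * ‖c (n + 1)‖ * ((r / s) ^ n * s ^ n)
      = ((n : ℝ) * (r / s) ^ n + (r / s) ^ n) * (‖c (n + 1)‖ * s ^ n) := by ring
    _ ≤ C * (‖c (n + 1)‖ * s ^ n) := by gcongr
    _ = C / s * (‖c (n + 1)‖ * s ^ (n + 1)) := by field_simp; ring

lemma DiscSummable.hasDerivAt {c : ℕ → ℂ} (hc : DiscSummable c) {x : ℂ} (hx : ‖x‖ < 1) :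
    HasDerivAt (pseries c) (pseries (_root_.dcoeff c) x) x := by
  obtain ⟨r, hxr, hr1⟩ := exists_between hx
  have hr0 : 0 ≤ r := (norm_nonneg x).trans hxr.le
  have hu : Summable (fun n : ℕ => ‖c n‖ * (n * r ^ (n - 1))) := by
    rw [← summable_nat_add_iff 1]
    refine (hc.dcoeff r hr0 hr1).congr fun n => ?_
    rw [_root_.dcoeff, norm_mul, norm_natCast_add_one]
    push_cast
    ring
  have h := hasDerivAt_tsum_of_isPreconnected hu (Metric.isOpen_ball (x := (0 : ℂ)) (ε := r))
    (convex_ball (0 : ℂ) r).isPreconnected (g := fun n y => c n * y ^ n)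
    (g' := fun n y => c n * (n * y ^ (n - 1))) (y₀ := x) (y := x)
    (fun n y _ => (hasDerivAt_pow n y).const_mul _) (fun n y hy => by
      have hy' : ‖y‖ ≤ r := by simpa using (Metric.mem_ball.1 hy).le
      rw [norm_mul, norm_mul, norm_pow, Complex.norm_natCast]
      gcongr) (by simpa using hxr) (hc.hasSum hx).summable (by simpa using hxr)
  have e : ∑' n : ℕ, c n * (n * x ^ (n - 1)) = pseries (_root_.dcoeff c) x := by
    have hs : HasSum (fun n : ℕ => c n * (n * x ^ (n - 1))) (pseries (_root_.dcoeff c) x) := by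
      have h1 := (hasSum_nat_add_iff (f := fun n : ℕ => c n * ((n : ℂ) * x ^ (n - 1))) 1
        (g := pseries (_root_.dcoeff c) x)).1 (by
          refine (hc.dcoeff.hasSum hx).congr_fun ?_
          intro n
          rw [_root_.dcoeff]
          push_cast
          ring)
      simpa using h1
    exact hs.tsum_eq
  rw [e] at h
  exact h

/-- Multiplication of a power series by `x` shifts its coefficients. -/
lemma hasSum_shift {g g' : ℕ → ℂ} {x S : ℂ} (h : HasSum (fun n => g n * x ^ n) S)
    (h0 : g' 0 = 0) (hs : ∀ n, g' (n + 1) = g n) : HasSum (fun n => g' n * x ^ n) (x * S) := by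
  have h1 := (hasSum_nat_add_iff (f := fun n : ℕ => g' n * x ^ n) 1 (g := x * S)).1 (by
    refine (h.mul_left x).congr_fun fun n => ?_
    rw [hs]
    ring)
  simpa [h0] using h1

/-- The hypergeometric operator acts on a power series through its coefficients. -/
lemma DiscSummable.hypergeometric_op {c : ℕ → ℂ} (hc : DiscSummable c) (α β γ : ℂ) {x : ℂ}
    (hx : ‖x‖ < 1) :
    HasSum (fun n : ℕ => (((n : ℂ) + 1) * (n + γ) * c (n + 1) - (n + α) * (n + β) * c n) * x ^ n)
      (x * (1 - x) * pseries (_root_.dcoeff (_root_.dcoeff c)) x +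
        (γ - (α + β + 1) * x) * pseries (_root_.dcoeff c) x - α * β * pseries c x) := by
  have h0 := hc.hasSum hx
  have h1 := hc.dcoeff.hasSum hx
  have h2 := hc.dcoeff.dcoeff.hasSum hx
  have h1x := hasSum_shift (g' := fun n => (n : ℂ) * c n) h1 (by simp)
    (fun n => by simp [_root_.dcoeff])
  have h2x := hasSum_shift (g' := fun n => (n : ℂ) * (((n : ℂ) + 1) * c (n + 1))) h2 (by simp)
    (fun n => by simp [_root_.dcoeff])
  have h2xx := hasSum_shift (g' := fun n => (n : ℂ) * (((n : ℂ) - 1) * c n)) h2x (by simp)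
    (fun n => by push_cast; ring)
  have hS := (((h2x.sub h2xx).add (h1.mul_left γ)).sub (h1x.mul_left (α + β + 1))).sub
    (h0.mul_left (α * β))
  have hS' := hS.congr_fun (g := fun n : ℕ => (((n : ℂ) + 1) * (n + γ) * c (n + 1) -
    (n + α) * (n + β) * c n) * x ^ n) (fun n => by simp only [_root_.dcoeff]; ring)
  have e : x * (1 - x) * pseries (_root_.dcoeff (_root_.dcoeff c)) x +
        (γ - (α + β + 1) * x) * pseries (_root_.dcoeff c) x - α * β * pseries c x =
      x * pseries (_root_.dcoeff (_root_.dcoeff c)) x -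
        x * (x * pseries (_root_.dcoeff (_root_.dcoeff c)) x) +
        γ * pseries (_root_.dcoeff c) x - (α + β + 1) * (x * pseries (_root_.dcoeff c) x) -
        α * β * pseries c x := by ring
  rw [e]
  exact hS'

/-! ### Coefficients of the hypergeometric and logarithmic solutions -/

/-- The Taylor coefficients of `₂F₁(a,b;c;·)`. -/
noncomputable def hcoeff (a b c : ℂ) (n : ℕ) : ℂ :=
  cpoch a n * cpoch b n / (cpoch c n * (n.factorial : ℂ))

lemma hyp2F1_eq_pseries (a b c x : ℂ) : hyp2F1 a b c x = pseries (hcoeff a b c) x := rfl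

lemma cpoch_succ (u : ℂ) (n : ℕ) : cpoch u (n + 1) = cpoch u n * (u + n) :=
  Finset.prod_range_succ _ _

lemma NotPole.cpoch_ne {z : ℂ} (hz : NotPole z) (n : ℕ) : cpoch z n ≠ 0 :=
  Finset.prod_ne_zero_iff.2 fun j _ => hz.add_ne j

lemma cpoch_one (n : ℕ) : cpoch 1 n = n.factorial := by
  induction n with
  | zero => simp [cpoch]
  | succ k ih => rw [cpoch_succ, ih, Nat.factorial_succ]; push_cast; ring

lemma natCast_factorial_ne (n : ℕ) : (n.factorial : ℂ) ≠ 0 := by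
  exact_mod_cast n.factorial_ne_zero

lemma hcoeff_zero (a b c : ℂ) : hcoeff a b c 0 = 1 := by simp [hcoeff, cpoch]

lemma hcoeff_succ (a b : ℂ) {c : ℂ} (hc : NotPole c) (n : ℕ) :
    ((n : ℂ) + 1) * (n + c) * hcoeff a b c (n + 1) = (n + a) * (n + b) * hcoeff a b c n := by
  have h1 := hc.cpoch_ne n
  have h2 : c + n ≠ 0 := hc.add_ne n
  have h3 := natCast_factorial_ne n
  have h4 : (n : ℂ) + 1 ≠ 0 := by exact_mod_cast n.succ_ne_zero
  rw [hcoeff, hcoeff, cpoch_succ, cpoch_succ, cpoch_succ, Nat.factorial_succ]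
  push_cast
  field_simp
  ring

lemma hcoeff_ne {a b c : ℂ} (ha : NotPole a) (hb : NotPole b) (hc : NotPole c) (n : ℕ) :
    hcoeff a b c n ≠ 0 :=
  div_ne_zero (mul_ne_zero (ha.cpoch_ne n) (hb.cpoch_ne n))
    (mul_ne_zero (hc.cpoch_ne n) (natCast_factorial_ne n))

lemma tendsto_natCast_add_div (a c : ℂ) :
    Tendsto (fun n : ℕ => ((n : ℂ) + a) / ((n : ℂ) + c)) atTop (𝓝 1) := by
  have h := (tendsto_natCast_div_add_atTop (𝕜 := ℂ) c).div
    (tendsto_natCast_div_add_atTop (𝕜 := ℂ) a) one_ne_zero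
  rw [div_one] at h
  refine h.congr' ?_
  filter_upwards [eventually_gt_atTop 0] with n hn
  have : (n : ℂ) ≠ 0 := by exact_mod_cast hn.ne'
  simp only [Pi.div_apply]
  rw [div_div_div_eq, mul_comm ((n : ℂ) + c), mul_div_mul_left _ _ this]

lemma discSummable_hcoeff {a b c : ℂ} (ha : NotPole a) (hb : NotPole b) (hc : NotPole c) :
    DiscSummable (hcoeff a b c) := by
  intro r hr0 hr1
  rcases hr0.eq_or_lt with rfl | hr0
  · refine summable_of_ne_finset_zero (s := {0}) fun n hn => ?_
    rw [zero_pow (by simpa using hn), mul_zero]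
  refine summable_of_ratio_test_tendsto_lt_one hr1 ?_ (?_ : Tendsto _ atTop (𝓝 r))
  · exact Eventually.of_forall fun n =>
      mul_ne_zero (norm_ne_zero_iff.2 (hcoeff_ne ha hb hc n)) (pow_ne_zero _ hr0.ne')
  · have h := (((tendsto_natCast_add_div a 1).mul (tendsto_natCast_add_div b c)).norm).mul_const r
    rw [mul_one, norm_one, one_mul] at h
    refine h.congr fun n => ?_
    have h1 := hcoeff_ne ha hb hc n
    have h2 : (n : ℂ) + c ≠ 0 := by rw [add_comm]; exact hc.add_ne n
    have h4 : (n : ℂ) + 1 ≠ 0 := by exact_mod_cast n.succ_ne_zero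
    have e : hcoeff a b c (n + 1) =
        ((n : ℂ) + a) / (n + 1) * (((n : ℂ) + b) / (n + c)) * hcoeff a b c n := by
      field_simp
      linear_combination hcoeff_succ a b hc n
    rw [Real.norm_of_nonneg (by positivity), Real.norm_of_nonneg (by positivity), e, pow_succ]
    simp only [norm_mul]
    have h1' : ‖hcoeff a b c n‖ ≠ 0 := norm_ne_zero_iff.2 h1
    have h5 : r ^ n ≠ 0 := pow_ne_zero _ hr0.ne'
    rw [eq_div_iff (mul_ne_zero h1' h5)]
    ring

lemma Gamma_add_nat {z : ℂ} (hz : NotPole z) (n : ℕ) : Gamma (z + n) = cpoch z n * Gamma z := by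
  induction n with
  | zero => simp [cpoch]
  | succ k ih => rw [Gamma_add_succ hz, ih, cpoch_succ]; ring

lemma zbCoeff_eq {a b : ℂ} (ha : NotPole a) (hb : NotPole b) (hab : NotPole (a + b)) (n : ℕ) :
    zbCoeff a b n = Gamma a * Gamma b / Gamma (a + b) * hcoeff a b (a + b) n := by
  have h1 := hab.Gamma_ne
  have h2 := hab.cpoch_ne n
  have h3 := natCast_factorial_ne n
  rw [zbCoeff, hcoeff, Gamma_add_nat ha, Gamma_add_nat hb, Gamma_add_nat hab]
  field_simp

/-- The hypergeometric equation for `₂F₁(a,b;c;·)` on the unit disc. -/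
lemma hcoeff_ode {a b c : ℂ} (ha : NotPole a) (hb : NotPole b) (hc : NotPole c) {x : ℂ}
    (hx : ‖x‖ < 1) :
    x * (1 - x) * pseries (dcoeff (dcoeff (hcoeff a b c))) x +
      (c - (a + b + 1) * x) * pseries (dcoeff (hcoeff a b c)) x -
      a * b * pseries (hcoeff a b c) x = 0 := by
  have h := (discSummable_hcoeff ha hb hc).hypergeometric_op a b c hx
  refine h.unique ?_
  refine hasSum_zero.congr_fun fun n => ?_
  rw [hcoeff_succ a b hc n]
  ring

/-- The harmonic-type factor of the logarithmic solution: the sum over `k < n` of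
`1/(a+k) + 1/(b+k) - 2/(k+1)`. -/
noncomputable def harmFactor (a b : ℂ) (n : ℕ) : ℂ :=
  ∑ k ∈ Finset.range n, (1 / (a + k) + 1 / (b + k) - 2 / ((k : ℂ) + 1))

/-- The Taylor coefficients of the non-logarithmic part of the logarithmic solution. -/
noncomputable def lcoeff (a b : ℂ) (n : ℕ) : ℂ := hcoeff a b 1 n * harmFactor a b n

lemma cdigamma_add_nat {z : ℂ} (hz : NotPole z) (n : ℕ) :
    cdigamma (z + n) = cdigamma z + ∑ k ∈ Finset.range n, 1 / (z + k) := by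
  induction n with
  | zero => simp
  | succ k ih =>
    rw [Finset.sum_range_succ, ← add_assoc, ← ih, ← cdigamma_add_one _ (hz.add_nat k)]
    push_cast
    rw [add_assoc]

lemma harmFactor_eq {a b : ℂ} (ha : NotPole a) (hb : NotPole b) (n : ℕ) :
    harmFactor a b n = cdigamma (a + n) - cdigamma a + cdigamma (b + n) - cdigamma b -
      2 * cdigamma ((n : ℂ) + 1) - 2 * eulerGammaC := by
  have h1 := cdigamma_add_nat notPole_one n
  rw [add_comm (n : ℂ) 1, h1, cdigamma_add_nat ha, cdigamma_add_nat hb, eulerGammaC, harmFactor,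
    Finset.sum_sub_distrib, Finset.sum_add_distrib]
  have : ∑ k ∈ Finset.range n, 2 / ((k : ℂ) + 1) = 2 * ∑ k ∈ Finset.range n, 1 / (1 + (k : ℂ)) := by
    rw [Finset.mul_sum]
    refine Finset.sum_congr rfl fun k _ => ?_
    rw [add_comm]
    ring
  rw [this]
  ring

lemma exists_norm_harmFactor_le {a b : ℂ} (ha : NotPole a) (hb : NotPole b) :
    ∃ C : ℝ, 0 < C ∧ ∀ n : ℕ, ‖harmFactor a b n‖ ≤ C * n := by
  obtain ⟨A, hA, hA'⟩ := ha.exists_bound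
  obtain ⟨B, hB, hB'⟩ := hb.exists_bound
  refine ⟨A + B + 2, by positivity, fun n => ?_⟩
  calc ‖harmFactor a b n‖ ≤ ∑ k ∈ Finset.range n, (A + B + 2) := by
        refine norm_sum_le_of_le _ fun k _ => ?_
        have h1 : (1 : ℝ) ≤ (k : ℝ) + 1 := by linarith [(Nat.cast_nonneg k : (0 : ℝ) ≤ k)]
        have h2 : ‖1 / (a + k)‖ ≤ A := (hA' k).trans (div_le_self hA.le h1)
        have h3 : ‖1 / (b + k)‖ ≤ B := (hB' k).trans (div_le_self hB.le h1)
        have h4 : ‖2 / ((k : ℂ) + 1)‖ ≤ 2 := by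
          rw [norm_div, norm_natCast_add_one, Complex.norm_ofNat]
          exact div_le_self zero_le_two h1
        calc _ ≤ ‖1 / (a + k) + 1 / (b + k)‖ + ‖2 / ((k : ℂ) + 1)‖ := norm_sub_le _ _
          _ ≤ ‖1 / (a + k)‖ + ‖1 / (b + k)‖ + ‖2 / ((k : ℂ) + 1)‖ := by
            gcongr; exact norm_add_le _ _
          _ ≤ _ := by gcongr
    _ = _ := by simp; ring

lemma discSummable_lcoeff {a b : ℂ} (ha : NotPole a) (hb : NotPole b) :
    DiscSummable (lcoeff a b) := by
  intro r hr0 hr1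
  obtain ⟨C, hC, hC'⟩ := exists_norm_harmFactor_le ha hb
  rw [← summable_nat_add_iff 1]
  refine Summable.of_nonneg_of_le (fun n => by positivity) (fun n => ?_)
    (((discSummable_hcoeff ha hb notPole_one).dcoeff r hr0 hr1).mul_left (C * r))
  rw [lcoeff, dcoeff, norm_mul, norm_mul, norm_natCast_add_one]
  have := hC' (n + 1)
  push_cast at this
  calc ‖hcoeff a b 1 (n + 1)‖ * ‖harmFactor a b (n + 1)‖ * r ^ (n + 1)
      ≤ ‖hcoeff a b 1 (n + 1)‖ * (C * ((n : ℝ) + 1)) * r ^ (n + 1) := by gcongr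
    _ = _ := by ring

/-- The hypergeometric recurrence for `lcoeff`, whose inhomogeneity comes from the increments of
`harmFactor`. -/
lemma lcoeff_recurrence {a b : ℂ} (ha : NotPole a) (hb : NotPole b) (n : ℕ) :
    ((n : ℂ) + 1) * (n + 1) * lcoeff a b (n + 1) - (n + a) * (n + b) * lcoeff a b n =
      (2 * n + (a + b)) * hcoeff a b 1 n - 2 * dcoeff (hcoeff a b 1) n := by
  have h := hcoeff_succ a b notPole_one n
  have h4 : (n : ℂ) + 1 ≠ 0 := by exact_mod_cast n.succ_ne_zero
  have h1 : a + n ≠ 0 := ha.add_ne n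
  have h2 : b + n ≠ 0 := hb.add_ne n
  have e : harmFactor a b (n + 1) =
      harmFactor a b n + (1 / (a + n) + 1 / (b + n) - 2 / ((n : ℂ) + 1)) :=
    Finset.sum_range_succ _ _
  have e1 : (n + a) * (n + b) * (1 / (a + n) + 1 / (b + n)) = 2 * n + (a + b) := by
    field_simp
    ring
  have e2 : ((n : ℂ) + 1) * (2 / ((n : ℂ) + 1)) = 2 := by field_simp
  rw [lcoeff, lcoeff, dcoeff, e]
  linear_combination (harmFactor a b n + (1 / (a + n) + 1 / (b + n))) * h +
    hcoeff a b 1 n * e1 - ((n : ℂ) + 1) * hcoeff a b 1 (n + 1) * e2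

/-- The inhomogeneous hypergeometric equation satisfied by the non-logarithmic part; its right-hand
side cancels the terms produced by the logarithm. -/
lemma lcoeff_ode {a b : ℂ} (ha : NotPole a) (hb : NotPole b) {x : ℂ} (hx : ‖x‖ < 1) :
    x * (1 - x) * pseries (dcoeff (dcoeff (lcoeff a b))) x +
      (1 - (a + b + 1) * x) * pseries (dcoeff (lcoeff a b)) x - a * b * pseries (lcoeff a b) x =
      2 * x * pseries (dcoeff (hcoeff a b 1)) x + (a + b) * pseries (hcoeff a b 1) x -
        2 * pseries (dcoeff (hcoeff a b 1)) x := by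
  have h := (discSummable_lcoeff ha hb).hypergeometric_op a b 1 hx
  refine h.unique ?_
  have hF := discSummable_hcoeff ha hb notPole_one
  have h0 := hF.hasSum hx
  have h1 := hF.dcoeff.hasSum hx
  have h1x := hasSum_shift (g' := fun n => (n : ℂ) * hcoeff a b 1 n) h1 (by simp)
    (fun n => by simp [dcoeff])
  have hS := ((h1x.mul_left 2).add (h0.mul_left (a + b))).sub (h1.mul_left 2)
  rw [← mul_assoc] at hS
  refine hS.congr_fun fun n => ?_
  rw [lcoeff_recurrence ha hb n]
  ring

lemma w21ln_eq {a b : ℂ} (ha : NotPole a) (hb : NotPole b) {ξ : ℝ} (hξ : ξ ∈ Set.Ioo (0 : ℝ) 1) :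
    w21ln a b ξ = pseries (hcoeff a b 1) ((1 - ξ : ℝ) : ℂ) * ((Real.log (1 - ξ) : ℝ) : ℂ) +
      pseries (lcoeff a b) ((1 - ξ : ℝ) : ℂ) := by
  have hx : ‖((1 - ξ : ℝ) : ℂ)‖ < 1 := by
    rw [Complex.norm_real, Real.norm_eq_abs, abs_lt]
    constructor <;> linarith [hξ.1, hξ.2]
  have h := (discSummable_lcoeff ha hb).hasSum hx
  have h0 : lcoeff a b 0 = 0 := by simp [lcoeff, harmFactor]
  have e := h.summable.tsum_eq_zero_add
  rw [w21ln, hyp2F1_eq_pseries]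
  congr 1
  rw [pseries, e, h0, zero_mul, zero_add]
  refine tsum_congr fun n => ?_
  rw [lcoeff, hcoeff, harmFactor_eq ha hb, cpoch_one]
  have e2 : (n : ℂ) + 1 + 1 = (n : ℂ) + 2 := by ring
  push_cast
  rw [e2]
  ring

/-! ### Solutions on the interval, Wronskians and uniqueness -/

/-- `u` is a solution on `(0,1)` of the hypergeometric equation with `c = a + b`; the functions
`u₁`, `u₂` are its first two derivatives. -/
structure IsSol (a b : ℂ) (u u₁ u₂ : ℝ → ℂ) : Prop where
  d1 : ∀ ξ ∈ Set.Ioo (0 : ℝ) 1, HasDerivAt u (u₁ ξ) ξ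
  d2 : ∀ ξ ∈ Set.Ioo (0 : ℝ) 1, HasDerivAt u₁ (u₂ ξ) ξ
  ode : ∀ ξ ∈ Set.Ioo (0 : ℝ) 1,
    (ξ : ℂ) * (1 - ξ) * u₂ ξ + (a + b - (a + b + 1) * ξ) * u₁ ξ - a * b * u ξ = 0

lemma IsSol.linear {a b : ℂ} {u u₁ u₂ v v₁ v₂ : ℝ → ℂ} (hu : IsSol a b u u₁ u₂)
    (hv : IsSol a b v v₁ v₂) (s t : ℂ) :
    IsSol a b (fun ξ => s * u ξ + t * v ξ) (fun ξ => s * u₁ ξ + t * v₁ ξ)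
      (fun ξ => s * u₂ ξ + t * v₂ ξ) where
  d1 ξ h := ((hu.d1 ξ h).const_mul s).add ((hv.d1 ξ h).const_mul t)
  d2 ξ h := ((hu.d2 ξ h).const_mul s).add ((hv.d2 ξ h).const_mul t)
  ode ξ h := by linear_combination s * hu.ode ξ h + t * hv.ode ξ h

lemma norm_ofReal_lt_one {ξ : ℝ} (h : ξ ∈ Set.Ioo (0 : ℝ) 1) : ‖(ξ : ℂ)‖ < 1 := by
  rw [Complex.norm_real, Real.norm_of_nonneg h.1.le]
  exact h.2

lemma one_sub_mem {ξ : ℝ} (h : ξ ∈ Set.Ioo (0 : ℝ) 1) : 1 - ξ ∈ Set.Ioo (0 : ℝ) 1 :=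
  ⟨by linarith [h.2], by linarith [h.1]⟩

lemma DiscSummable.hasDerivAt_real {c : ℕ → ℂ} (hc : DiscSummable c) {ξ : ℝ}
    (h : ξ ∈ Set.Ioo (0 : ℝ) 1) :
    HasDerivAt (fun t : ℝ => pseries c (t : ℂ)) (pseries (_root_.dcoeff c) (ξ : ℂ)) ξ :=
  (hc.hasDerivAt (norm_ofReal_lt_one h)).comp_ofReal

lemma DiscSummable.hasDerivAt_one_sub {c : ℕ → ℂ} (hc : DiscSummable c) {ξ : ℝ}
    (h : ξ ∈ Set.Ioo (0 : ℝ) 1) :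
    HasDerivAt (fun t : ℝ => pseries c ((1 - t : ℝ) : ℂ))
      (-pseries (_root_.dcoeff c) ((1 - ξ : ℝ) : ℂ)) ξ :=
  (hc.hasDerivAt_real (one_sub_mem h)).comp_const_sub 1 ξ

/-- The solution `₂F₁(a,b;1;1-ξ)`, regular at `ξ = 1`. -/
noncomputable def regSol (a b : ℂ) (ξ : ℝ) : ℂ := pseries (hcoeff a b 1) ((1 - ξ : ℝ) : ℂ)

/-- The non-logarithmic part of the logarithmic solution. -/
noncomputable def regPart (a b : ℂ) (ξ : ℝ) : ℂ := pseries (lcoeff a b) ((1 - ξ : ℝ) : ℂ)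

/-- The logarithmic solution at `ξ = 1`. -/
noncomputable def logSol (a b : ℂ) (ξ : ℝ) : ℂ :=
  regSol a b ξ * ((Real.log (1 - ξ) : ℝ) : ℂ) + regPart a b ξ

/-- The derivative of `regSol`. -/
noncomputable def regSol₁ (a b : ℂ) (ξ : ℝ) : ℂ :=
  -pseries (dcoeff (hcoeff a b 1)) ((1 - ξ : ℝ) : ℂ)

/-- The derivative of `regPart`. -/
noncomputable def regPart₁ (a b : ℂ) (ξ : ℝ) : ℂ :=
  -pseries (dcoeff (lcoeff a b)) ((1 - ξ : ℝ) : ℂ)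

/-- The derivative of `logSol`. -/
noncomputable def logSol₁ (a b : ℂ) (ξ : ℝ) : ℂ :=
  regSol₁ a b ξ * ((Real.log (1 - ξ) : ℝ) : ℂ) - regSol a b ξ / (1 - ξ) + regPart₁ a b ξ

lemma isSol_regSol {a b : ℂ} (ha : NotPole a) (hb : NotPole b) :
    IsSol a b (regSol a b) (regSol₁ a b)
      (fun ξ => pseries (dcoeff (dcoeff (hcoeff a b 1))) ((1 - ξ : ℝ) : ℂ)) where
  d1 ξ h := (discSummable_hcoeff ha hb notPole_one).hasDerivAt_one_sub h
  d2 ξ h := by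
    have := ((discSummable_hcoeff ha hb notPole_one).dcoeff.hasDerivAt_one_sub h).neg
    rw [neg_neg] at this
    exact this
  ode ξ h := by
    have := hcoeff_ode ha hb notPole_one (norm_ofReal_lt_one (one_sub_mem h))
    rw [regSol₁, regSol]
    push_cast at this ⊢
    linear_combination this

lemma hasDerivAt_log_one_sub {ξ : ℝ} (h : ξ ∈ Set.Ioo (0 : ℝ) 1) :
    HasDerivAt (fun t : ℝ => ((Real.log (1 - t) : ℝ) : ℂ)) (-(1 / (1 - (ξ : ℂ)))) ξ := by
  have h1 := ((Real.hasDerivAt_log (one_sub_mem h).1.ne').comp_const_sub 1 ξ).ofReal_comp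
  convert h1 using 1
  push_cast
  rw [one_div]

lemma one_sub_ofReal_ne {ξ : ℝ} (h : ξ ∈ Set.Ioo (0 : ℝ) 1) : 1 - (ξ : ℂ) ≠ 0 := by
  have : ((1 - ξ : ℝ) : ℂ) ≠ 0 := ofReal_ne_zero.2 (one_sub_mem h).1.ne'
  push_cast at this
  exact this

lemma isSol_logSol {a b : ℂ} (ha : NotPole a) (hb : NotPole b) :
    IsSol a b (logSol a b) (logSol₁ a b)
      (fun ξ => pseries (dcoeff (dcoeff (hcoeff a b 1))) ((1 - ξ : ℝ) : ℂ) *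
          ((Real.log (1 - ξ) : ℝ) : ℂ) - 2 * regSol₁ a b ξ / (1 - ξ) -
          regSol a b ξ / (1 - ξ) ^ 2 + pseries (dcoeff (dcoeff (lcoeff a b))) ((1 - ξ : ℝ) : ℂ)) where
  d1 ξ h := by
    have hG : HasDerivAt (regPart a b) (regPart₁ a b ξ) ξ :=
      (discSummable_lcoeff ha hb).hasDerivAt_one_sub h
    have := (((isSol_regSol ha hb).d1 ξ h).mul (hasDerivAt_log_one_sub h)).add hG
    refine this.congr_deriv ?_
    rw [logSol₁]
    ring
  d2 ξ h := by
    have hG : HasDerivAt (regPart₁ a b)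
        (pseries (dcoeff (dcoeff (lcoeff a b))) ((1 - ξ : ℝ) : ℂ)) ξ := by
      have := ((discSummable_lcoeff ha hb).dcoeff.hasDerivAt_one_sub h).neg
      rw [neg_neg] at this
      exact this
    have hne := one_sub_ofReal_ne h
    have hlin : HasDerivAt (fun t : ℝ => 1 - (t : ℂ)) (-1) ξ :=
      (hasDerivAt_id ξ).ofReal_comp.const_sub 1
    have hF := isSol_regSol ha hb
    have := (((hF.d2 ξ h).mul (hasDerivAt_log_one_sub h)).sub
      ((hF.d1 ξ h).div hlin hne)).add hG
    refine this.congr_deriv ?_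
    field_simp
    ring
  ode ξ h := by
    have hx := norm_ofReal_lt_one (one_sub_mem h)
    have h1 := hcoeff_ode ha hb notPole_one hx
    have h2 := lcoeff_ode ha hb hx
    have hne := one_sub_ofReal_ne h
    rw [logSol₁, logSol, regSol₁, regSol, regPart₁, regPart]
    generalize ((Real.log (1 - ξ) : ℝ) : ℂ) = L at *
    push_cast at h1 h2 ⊢
    generalize pseries (dcoeff (dcoeff (hcoeff a b 1))) (1 - (ξ : ℂ)) = F2 at *
    generalize pseries (dcoeff (hcoeff a b 1)) (1 - (ξ : ℂ)) = F1 at *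
    generalize pseries (hcoeff a b 1) (1 - (ξ : ℂ)) = F0 at *
    field_simp
    linear_combination (1 - (ξ : ℂ)) * (L * h1 + h2)

lemma hasDerivAt_ofReal_cpow {ξ : ℝ} (h : 0 < ξ) (p : ℂ) :
    HasDerivAt (fun t : ℝ => (t : ℂ) ^ p) (p * (ξ : ℂ) ^ p / ξ) ξ := by
  have h0 : (ξ : ℂ) ≠ 0 := ofReal_ne_zero.2 h.ne'
  have hs : (ξ : ℂ) ∈ slitPlane := ofReal_mem_slitPlane.2 h
  have := ((hasDerivAt_id (ξ : ℂ)).cpow_const (c := p) hs).comp_ofReal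
  refine this.congr_deriv ?_
  simp only [id]
  rw [cpow_sub _ _ h0, cpow_one]
  ring

lemma isSol_hyp_zero {a b : ℂ} (ha : NotPole a) (hb : NotPole b) (hab : NotPole (a + b)) :
    IsSol a b (fun ξ => pseries (hcoeff a b (a + b)) ξ)
      (fun ξ => pseries (dcoeff (hcoeff a b (a + b))) ξ)
      (fun ξ => pseries (dcoeff (dcoeff (hcoeff a b (a + b)))) ξ) where
  d1 _ h := (discSummable_hcoeff ha hb hab).hasDerivAt_real h
  d2 _ h := (discSummable_hcoeff ha hb hab).dcoeff.hasDerivAt_real h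
  ode _ h := hcoeff_ode ha hb hab (norm_ofReal_lt_one h)

/-- The second solution at `ξ = 0`, with exponent `1 - a - b`. -/
lemma isSol_hyp_zero' {a b : ℂ} (ha : NotPole (1 - a)) (hb : NotPole (1 - b))
    (hab : NotPole (1 - b + (1 - a))) :
    ∃ u₁ u₂, IsSol a b
      (fun ξ => (ξ : ℂ) ^ (1 - a - b) * pseries (hcoeff (1 - b) (1 - a) (1 - b + (1 - a))) ξ)
      u₁ u₂ := by
  set c := hcoeff (1 - b) (1 - a) (1 - b + (1 - a)) with hc
  have hcs : DiscSummable c := discSummable_hcoeff hb ha hab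
  refine ⟨fun ξ => (ξ : ℂ) ^ (1 - a - b) *
      (pseries (dcoeff c) ξ + (1 - a - b) * pseries c ξ / ξ),
    fun ξ => (ξ : ℂ) ^ (1 - a - b) * (pseries (dcoeff (dcoeff c)) ξ +
      2 * (1 - a - b) * pseries (dcoeff c) ξ / ξ +
      (1 - a - b) * (1 - a - b - 1) * pseries c ξ / ξ ^ 2), ?_, ?_, ?_⟩
  · intro ξ h
    have := (hasDerivAt_ofReal_cpow h.1 (1 - a - b)).mul (hcs.hasDerivAt_real h)
    refine this.congr_deriv ?_
    ring
  · intro ξ h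
    have h0 : (ξ : ℂ) ≠ 0 := ofReal_ne_zero.2 h.1.ne'
    have hlin : HasDerivAt (fun t : ℝ => (t : ℂ)) 1 ξ := (hasDerivAt_id ξ).ofReal_comp
    have := (hasDerivAt_ofReal_cpow h.1 (1 - a - b)).mul ((hcs.dcoeff.hasDerivAt_real h).add
      (((hcs.hasDerivAt_real h).const_mul (1 - a - b)).div hlin h0))
    refine this.congr_deriv ?_
    simp only [Pi.add_apply, Pi.div_apply]
    field_simp
    ring
  · intro ξ h
    have h0 : (ξ : ℂ) ≠ 0 := ofReal_ne_zero.2 h.1.ne'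
    have := hcoeff_ode hb ha hab (norm_ofReal_lt_one h)
    rw [← hc] at this
    field_simp
    linear_combination (ξ : ℂ) ^ (1 - a - b) * (ξ : ℂ) * this

/-- Abel's identity: `ξ^(a+b) (1-ξ)` times the Wronskian of two solutions is constant. -/
lemma IsSol.wronskian {a b : ℂ} {u u₁ u₂ v v₁ v₂ : ℝ → ℂ} (hu : IsSol a b u u₁ u₂)
    (hv : IsSol a b v v₁ v₂) :
    ∃ C : ℂ, ∀ ξ ∈ Set.Ioo (0 : ℝ) 1,
      (u ξ * v₁ ξ - u₁ ξ * v ξ) * ((ξ : ℂ) ^ (a + b) * (1 - ξ)) = C := by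
  have hd : ∀ ξ ∈ Set.Ioo (0 : ℝ) 1, HasDerivAt
      (fun ξ : ℝ => (u ξ * v₁ ξ - u₁ ξ * v ξ) * ((ξ : ℂ) ^ (a + b) * (1 - ξ))) 0 ξ := by
    intro ξ h
    have h0 : (ξ : ℂ) ≠ 0 := ofReal_ne_zero.2 h.1.ne'
    have hlin : HasDerivAt (fun t : ℝ => 1 - (t : ℂ)) (-1) ξ :=
      (hasDerivAt_id ξ).ofReal_comp.const_sub 1
    have := (((hu.d1 ξ h).mul (hv.d2 ξ h)).sub ((hu.d2 ξ h).mul (hv.d1 ξ h))).mul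
      ((hasDerivAt_ofReal_cpow h.1 (a + b)).mul hlin)
    refine this.congr_deriv ?_
    have e1 := hu.ode ξ h
    have e2 := hv.ode ξ h
    simp only [Pi.sub_apply, Pi.mul_apply]
    field_simp
    linear_combination (ξ : ℂ) ^ (a + b) * (u ξ * e2 - v ξ * e1)
  obtain ⟨C, hC⟩ := isOpen_Ioo.exists_is_const_of_deriv_eq_zero isPreconnected_Ioo
    (fun ξ h => (hd ξ h).differentiableAt.differentiableWithinAt) (fun ξ h => (hd ξ h).deriv)
  exact ⟨C, fun ξ h => hC ξ h⟩

lemma pseries_zero (c : ℕ → ℂ) : pseries c 0 = c 0 := by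
  rw [pseries, tsum_eq_single 0 (fun n hn => by rw [zero_pow hn, mul_zero])]
  simp

lemma tendsto_one_sub : Tendsto (fun ξ : ℝ => ((1 - ξ : ℝ) : ℂ)) (𝓝[<] 1) (𝓝 0) := by
  have : Continuous (fun ξ : ℝ => ((1 - ξ : ℝ) : ℂ)) := by fun_prop
  have h := this.tendsto 1
  simp only [sub_self, ofReal_zero] at h
  exact h.mono_left nhdsWithin_le_nhds

lemma DiscSummable.tendsto {c : ℕ → ℂ} (hc : DiscSummable c) :
    Tendsto (fun ξ : ℝ => pseries c ((1 - ξ : ℝ) : ℂ)) (𝓝[<] 1) (𝓝 (c 0)) := by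
  have h := (hc.hasDerivAt (x := 0) (by simp)).continuousAt.tendsto
  rw [pseries_zero] at h
  exact h.comp tendsto_one_sub

lemma tendsto_regSol {a b : ℂ} (ha : NotPole a) (hb : NotPole b) :
    Tendsto (regSol a b) (𝓝[<] 1) (𝓝 1) := by
  have := (discSummable_hcoeff ha hb notPole_one).tendsto
  rwa [hcoeff_zero] at this

lemma tendsto_regPart {a b : ℂ} (ha : NotPole a) (hb : NotPole b) :
    Tendsto (regPart a b) (𝓝[<] 1) (𝓝 0) := by
  have := (discSummable_lcoeff ha hb).tendsto
  have h0 : lcoeff a b 0 = 0 := by simp [lcoeff, harmFactor]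
  rwa [h0] at this

lemma eventually_mem_Ioo : ∀ᶠ ξ : ℝ in 𝓝[<] 1, ξ ∈ Set.Ioo (0 : ℝ) 1 :=
  Ioo_mem_nhdsLT zero_lt_one

lemma tendsto_ofReal_cpow_one (p : ℂ) :
    Tendsto (fun ξ : ℝ => (ξ : ℂ) ^ p) (𝓝[<] 1) (𝓝 1) := by
  have h := (hasDerivAt_ofReal_cpow one_pos p).continuousAt.tendsto
  simp only [ofReal_one, one_cpow] at h
  exact h.mono_left nhdsWithin_le_nhds

/-- The constant of Abel's identity for the two solutions at `ξ = 1`, found by letting `ξ → 1`. -/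
lemma wronskian_reg_log {a b : ℂ} (ha : NotPole a) (hb : NotPole b) {ξ : ℝ}
    (h : ξ ∈ Set.Ioo (0 : ℝ) 1) :
    (regSol a b ξ * logSol₁ a b ξ - regSol₁ a b ξ * logSol a b ξ) *
      ((ξ : ℂ) ^ (a + b) * (1 - ξ)) = -1 := by
  obtain ⟨C, hC⟩ := (isSol_regSol ha hb).wronskian (isSol_logSol ha hb)
  rw [hC ξ h]
  have hF := tendsto_regSol ha hb
  have hG := tendsto_regPart ha hb
  have hF1 : Tendsto (regSol₁ a b) (𝓝[<] 1) (𝓝 (-dcoeff (hcoeff a b 1) 0)) :=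
    (discSummable_hcoeff ha hb notPole_one).dcoeff.tendsto.neg
  have hG1 : Tendsto (regPart₁ a b) (𝓝[<] 1) (𝓝 (-dcoeff (lcoeff a b) 0)) :=
    (discSummable_lcoeff ha hb).dcoeff.tendsto.neg
  have hlim := (tendsto_ofReal_cpow_one (a + b)).mul
    ((tendsto_one_sub.mul ((hF.mul hG1).sub (hF1.mul hG))).sub (hF.mul hF))
  simp only [zero_mul, mul_one, zero_sub, one_mul] at hlim
  refine tendsto_nhds_unique (tendsto_const_nhds.congr' ?_) hlim
  filter_upwards [eventually_mem_Ioo] with t ht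
  rw [← hC t ht, logSol₁, logSol]
  have hne := one_sub_ofReal_ne ht
  push_cast
  field_simp
  ring

/-- Every solution is a combination of the two solutions at `ξ = 1`. -/
lemma IsSol.exists_eq {a b : ℂ} (ha : NotPole a) (hb : NotPole b) {u u₁ u₂ : ℝ → ℂ}
    (hu : IsSol a b u u₁ u₂) :
    ∃ s t : ℂ, ∀ ξ ∈ Set.Ioo (0 : ℝ) 1, u ξ = s * logSol a b ξ + t * regSol a b ξ := by
  obtain ⟨A, hA⟩ := hu.wronskian (isSol_logSol ha hb)
  obtain ⟨B, hB⟩ := hu.wronskian (isSol_regSol ha hb)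
  refine ⟨B, -A, fun ξ h => ?_⟩
  linear_combination u ξ * wronskian_reg_log ha hb h - regSol a b ξ * hA ξ h +
    logSol a b ξ * hB ξ h

lemma tendsto_log_one_sub : Tendsto (fun ξ : ℝ => Real.log (1 - ξ)) (𝓝[<] 1) atBot := by
  refine Real.tendsto_log_nhdsGT_zero.comp (tendsto_nhdsWithin_iff.2 ⟨?_, ?_⟩)
  · have : Continuous (fun ξ : ℝ => 1 - ξ) := by fun_prop
    have h := this.tendsto 1
    rw [sub_self] at h
    exact h.mono_left nhdsWithin_le_nhds
  · filter_upwards [eventually_mem_Ioo] with t ht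
    exact (one_sub_mem ht).1

/-- A solution that tends to zero at `ξ = 1` vanishes identically. -/
lemma IsSol.eq_zero {a b : ℂ} (ha : NotPole a) (hb : NotPole b) {u u₁ u₂ : ℝ → ℂ}
    (hu : IsSol a b u u₁ u₂) (h0 : Tendsto u (𝓝[<] 1) (𝓝 0)) {ξ : ℝ}
    (h : ξ ∈ Set.Ioo (0 : ℝ) 1) : u ξ = 0 := by
  obtain ⟨s, t, hst⟩ := hu.exists_eq ha hb
  have hF := tendsto_regSol ha hb
  have hG := tendsto_regPart ha hb
  have hLinv : Tendsto (fun ξ : ℝ => ((Real.log (1 - ξ) : ℝ) : ℂ)⁻¹) (𝓝[<] 1) (𝓝 0) := by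
    have := (continuous_ofReal.tendsto 0).comp (tendsto_inv_atBot_zero.comp tendsto_log_one_sub)
    simpa [Function.comp_def] using this
  have hs : s = 0 := by
    have h1 := ((h0.sub (hG.const_mul s)).sub (hF.const_mul t)).mul hLinv
    rw [mul_zero] at h1
    have h2 := hF.const_mul s
    rw [mul_one] at h2
    refine tendsto_nhds_unique (h2.congr' ?_) h1
    filter_upwards [eventually_mem_Ioo] with x hx
    have hL : ((Real.log (1 - x) : ℝ) : ℂ) ≠ 0 :=
      ofReal_ne_zero.2 (Real.log_neg (one_sub_mem hx).1 (one_sub_mem hx).2).ne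
    rw [hst x hx, logSol, ← div_eq_mul_inv, eq_div_iff hL]
    ring
  have ht : t = 0 := by
    have h2 := hF.const_mul t
    rw [mul_one] at h2
    refine tendsto_nhds_unique (h2.congr' ?_) h0
    filter_upwards [eventually_mem_Ioo] with x hx
    rw [hst x hx, hs]
    ring
  rw [hst ξ h, hs, ht]
  ring

/-! ### Asymptotics at the endpoint and connection formulas -/

lemma hasSum_log_div {ξ : ℝ} (h : ξ ∈ Set.Ioo (0 : ℝ) 1) :
    HasSum (fun n : ℕ => 1 / ((n : ℂ) + 1) * (ξ : ℂ) ^ n)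
      (-(((Real.log (1 - ξ) : ℝ) : ℂ) / ξ)) := by
  have h0 : (ξ : ℂ) ≠ 0 := ofReal_ne_zero.2 h.1.ne'
  have h1 := Real.hasSum_pow_div_log_of_abs_lt_one (x := ξ) (by rw [abs_of_pos h.1]; exact h.2)
  have h2 := (Complex.hasSum_ofReal.2 h1).div_const (ξ : ℂ)
  push_cast at h2
  rw [neg_div] at h2
  refine h2.congr_fun fun n => ?_
  rw [pow_succ]
  field_simp

lemma discSummable_zbCoeff {α β : ℂ} (hα : NotPole α) (hβ : NotPole β) (hαβ : NotPole (α + β)) :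
    DiscSummable (zbCoeff α β) := by
  intro r h0 h1
  refine ((discSummable_hcoeff hα hβ hαβ r h0 h1).mul_left
    ‖Gamma α * Gamma β / Gamma (α + β)‖).congr fun n => ?_
  rw [zbCoeff_eq hα hβ hαβ, norm_mul]
  ring

lemma pseries_zbCoeff {α β : ℂ} (hα : NotPole α) (hβ : NotPole β) (hαβ : NotPole (α + β)) (x : ℂ) :
    pseries (zbCoeff α β) x =
      Gamma α * Gamma β / Gamma (α + β) * pseries (hcoeff α β (α + β)) x := by
  rw [pseries, pseries, ← tsum_mul_left]
  refine tsum_congr fun n => ?_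
  rw [zbCoeff_eq hα hβ hαβ]
  ring

/-- The behaviour of the zero-balanced series at `ξ = 1`, by Abel's limit theorem: it diverges like
`-log(1-ξ)`, with constant term `-(ψ(α) + ψ(β) + 2γ)`. -/
lemma tendsto_pseries_zbCoeff {α β : ℂ} (hα : NotPole α) (hβ : NotPole β)
    (hαβ : NotPole (α + β)) :
    Tendsto (fun ξ : ℝ => pseries (zbCoeff α β) ξ + ((Real.log (1 - ξ) : ℝ) : ℂ) / ξ) (𝓝[<] 1)
      (𝓝 (-(cdigamma α + cdigamma β + 2 * eulerGammaC))) := by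
  have h := Complex.tendsto_tsum_powerSeries_nhdsWithin_lt (tendsto_sum_zbCoeff hα hβ hαβ)
  rw [tendsto_map'_iff] at h
  refine h.congr' ?_
  filter_upwards [eventually_mem_Ioo] with ξ hξ
  have h1 := ((discSummable_zbCoeff hα hβ hαβ).hasSum (norm_ofReal_lt_one hξ)).sub
    (hasSum_log_div hξ)
  rw [sub_neg_eq_add] at h1
  rw [← h1.tsum_eq]
  refine tsum_congr fun n => ?_
  ring

/-- A function differentiable at `1` and vanishing there kills the logarithmic singularity. -/
lemma tendsto_mul_log_one_sub {h : ℝ → ℂ} {h' : ℂ} (hd : HasDerivAt h h' 1) (h1 : h 1 = 0) :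
    Tendsto (fun ξ : ℝ => h ξ * ((Real.log (1 - ξ) : ℝ) : ℂ)) (𝓝[<] 1) (𝓝 0) := by
  have hs := (hasDerivAt_iff_tendsto_slope.1 hd).mono_left (nhdsLT_le_nhdsNE (1 : ℝ))
  have hc : Continuous (fun ξ : ℝ => (((1 - ξ) * Real.log (1 - ξ) : ℝ) : ℂ)) :=
    continuous_ofReal.comp (Real.continuous_mul_log.comp (by fun_prop))
  have hl := (hc.tendsto 1).mono_left (nhdsWithin_le_nhds (s := Set.Iio 1))
  simp only [sub_self, zero_mul, ofReal_zero] at hl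
  have hm := (hs.mul hl).neg
  rw [mul_zero, neg_zero] at hm
  refine hm.congr' ?_
  filter_upwards [eventually_mem_Ioo] with ξ hξ
  have hne := one_sub_ofReal_ne hξ
  have hne' : (ξ : ℂ) - 1 ≠ 0 := fun e => hne (by linear_combination -e)
  rw [slope_def_module, h1, sub_zero, Complex.real_smul]
  push_cast
  field_simp
  ring

lemma hasDerivAt_regSol_one {a b : ℂ} (ha : NotPole a) (hb : NotPole b) :
    ∃ d, HasDerivAt (regSol a b) d 1 := by
  have h := ((discSummable_hcoeff ha hb notPole_one).hasDerivAt (x := ((1 - 1 : ℝ) : ℂ))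
    (by simp)).comp_ofReal
  exact ⟨_, h.comp_const_sub 1 1⟩

/-- The combination of a power of `ξ` times a zero-balanced series with the two solutions at
`ξ = 1` in which the logarithmic singularity and the constant term both cancel. -/
lemma tendsto_connection {a b α β : ℂ} (ha : NotPole a) (hb : NotPole b) (hα : NotPole α)
    (hβ : NotPole β) (hαβ : NotPole (α + β)) (p : ℂ) :
    Tendsto (fun ξ : ℝ => (ξ : ℂ) ^ p * pseries (zbCoeff α β) ξ + (logSol a b ξ +
      (cdigamma α + cdigamma β + 2 * eulerGammaC) * regSol a b ξ)) (𝓝[<] 1) (𝓝 0) := by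
  set P := cdigamma α + cdigamma β + 2 * eulerGammaC
  obtain ⟨d, hd⟩ := hasDerivAt_regSol_one ha hb
  have hp := hasDerivAt_ofReal_cpow one_pos (p - 1)
  have h0 : regSol a b 1 = 1 := by simp [regSol, pseries_zero, hcoeff_zero]
  have hH := tendsto_mul_log_one_sub (hd.sub hp) (by simp [h0])
  have hlim := (((tendsto_ofReal_cpow_one p).mul (tendsto_pseries_zbCoeff hα hβ hαβ)).add
    ((tendsto_regSol ha hb).const_mul P)).add ((tendsto_regPart ha hb).add hH)
  have e : 1 * -P + P * 1 + (0 + 0) = 0 := by ring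
  rw [e] at hlim
  refine hlim.congr' ?_
  filter_upwards [eventually_mem_Ioo] with ξ hξ
  have hξ0 : (ξ : ℂ) ≠ 0 := ofReal_ne_zero.2 hξ.1.ne'
  simp only [Pi.sub_apply]
  rw [cpow_sub _ _ hξ0, cpow_one, logSol]
  ring

/-- Connection formula for the first solution at `ξ = 0`. -/
lemma connection_first {a b : ℂ} (ha : NotPole a) (hb : NotPole b) (hab : NotPole (a + b)) {ξ : ℝ}
    (h : ξ ∈ Set.Ioo (0 : ℝ) 1) :
    Gamma a * Gamma b / Gamma (a + b) * hyp2F1 a b (a + b) ξ =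
      -(logSol a b ξ + (cdigamma a + cdigamma b + 2 * eulerGammaC) * regSol a b ξ) := by
  have hs := ((isSol_hyp_zero ha hb hab).linear ((isSol_logSol ha hb).linear (isSol_regSol ha hb)
    1 (cdigamma a + cdigamma b + 2 * eulerGammaC)) (Gamma a * Gamma b / Gamma (a + b)) 1)
  have h0 := hs.eq_zero ha hb ((tendsto_connection ha hb ha hb hab 0).congr fun t => by
    rw [pseries_zbCoeff ha hb hab, cpow_zero]
    ring) h
  rw [hyp2F1_eq_pseries]
  linear_combination h0

/-- Connection formula for the second solution at `ξ = 0`. -/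
lemma connection_second {a b : ℂ} (ha : NotPole a) (hb : NotPole b) (ha' : NotPole (1 - a))
    (hb' : NotPole (1 - b)) (hab : NotPole (2 - a - b)) {ξ : ℝ} (h : ξ ∈ Set.Ioo (0 : ℝ) 1) :
    Gamma (1 - a) * Gamma (1 - b) / Gamma (2 - a - b) *
        ((ξ : ℂ) ^ (1 - a - b) * hyp2F1 (1 - b) (1 - a) (2 - a - b) ξ) =
      -(logSol a b ξ + (cdigamma (1 - a) + cdigamma (1 - b) + 2 * eulerGammaC) *
        regSol a b ξ) := by
  have e : 2 - a - b = 1 - b + (1 - a) := by ring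
  rw [e] at hab ⊢
  obtain ⟨u₁, u₂, hu⟩ := isSol_hyp_zero' ha' hb' hab
  have hs := (hu.linear ((isSol_logSol ha hb).linear (isSol_regSol ha hb)
    1 (cdigamma (1 - b) + cdigamma (1 - a) + 2 * eulerGammaC))
    (Gamma (1 - b) * Gamma (1 - a) / Gamma (1 - b + (1 - a))) 1)
  have h0 := hs.eq_zero ha hb ((tendsto_connection ha hb hb' ha' hab (1 - a - b)).congr fun t => by
    rw [pseries_zbCoeff hb' ha' hab]
    ring) h
  rw [hyp2F1_eq_pseries]
  linear_combination h0

lemma sin_pi_mul_ne {z : ℂ} (hz : ∀ m : ℤ, z ≠ (m : ℂ)) : sin (Real.pi * z) ≠ 0 := by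
  rw [Ne, Complex.sin_eq_zero_iff]
  rintro ⟨k, hk⟩
  have hpi : (Real.pi : ℂ) ≠ 0 := ofReal_ne_zero.2 Real.pi_ne_zero
  refine hz k (mul_left_cancel₀ hpi ?_)
  rw [hk]
  ring

lemma notPole_of_not_int {z : ℂ} (hz : ∀ m : ℤ, z ≠ (m : ℂ)) : NotPole z := fun m h =>
  hz (-m) (by rw [h]; push_cast; ring)

/-- The reflection formula `ψ(1-z) - ψ(z) = π cot(πz)`. -/
lemma cdigamma_one_sub {z : ℂ} (hz : ∀ m : ℤ, z ≠ (m : ℂ)) :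
    cdigamma (1 - z) - cdigamma z = Real.pi * cos (Real.pi * z) / sin (Real.pi * z) := by
  have h1 : NotPole z := notPole_of_not_int hz
  have h2 : NotPole (1 - z) := notPole_of_not_int fun m h =>
    hz (1 - m) (by push_cast; linear_combination -h)
  have hs := sin_pi_mul_ne hz
  have d1 := (differentiableAt_Gamma z h1).hasDerivAt
  have d2 := (differentiableAt_Gamma (1 - z) h2).hasDerivAt.comp_const_sub 1 z
  have d := d1.mul d2
  have hlin : HasDerivAt (fun w : ℂ => Real.pi * w) (Real.pi) z := by
    simpa using (hasDerivAt_id z).const_mul (Real.pi : ℂ)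
  have d' := (hlin.csin.inv hs).const_mul (Real.pi : ℂ)
  have hd := d.unique (d'.congr_of_eventuallyEq (Eventually.of_forall fun w => by
    simp only [Pi.mul_apply, Pi.inv_apply]
    rw [Gamma_mul_Gamma_one_sub, div_eq_mul_inv]))
  have hr := Gamma_mul_Gamma_one_sub z
  have g1 := h1.Gamma_ne
  have g2 := h2.Gamma_ne
  have hpi : (Real.pi : ℂ) ≠ 0 := ofReal_ne_zero.2 Real.pi_ne_zero
  rw [eq_div_iff hs] at hr
  rw [cdigamma, cdigamma]
  generalize sin (Real.pi * z) = s at *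
  generalize cos (Real.pi * z) = c at *
  have hd' : (Gamma z * deriv Gamma (1 - z) - Gamma (1 - z) * deriv Gamma z) * s ^ 2 =
      Real.pi ^ 2 * c := by
    field_simp at hd
    linear_combination -hd
  have key : (Gamma z * deriv Gamma (1 - z) - Gamma (1 - z) * deriv Gamma z) * s =
      Gamma z * Gamma (1 - z) * Real.pi * c := by
    refine mul_right_cancel₀ hs ?_
    linear_combination hd' - Real.pi * c * hr
  field_simp
  linear_combination key

/-- Connection formula expressing the logarithmic solution at `ξ = 1` in terms of the
fundamental system `w_{1,0}(ξ) = ₂F₁(a,b;a+b;ξ)`,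
`w_{2,0}(ξ) = ξ^{1-a-b} ₂F₁(1-b,1-a;2-a-b;ξ)` at `ξ = 0`. -/
theorem hypergeometric_connection_log (a b : ℂ)
    (ha : ∀ m : ℤ, a ≠ (m : ℂ)) (hb : ∀ m : ℤ, b ≠ (m : ℂ))
    (hab : ∀ m : ℤ, a + b ≠ (m : ℂ))
    (ξ : ℝ) (hξ : ξ ∈ Set.Ioo (0 : ℝ) 1) :
    w21ln a b ξ =
      -(cdigamma (1 - a) + cdigamma (1 - b) + 2 * eulerGammaC) *
          (Complex.Gamma (1 - a - b) / (Complex.Gamma (1 - a) * Complex.Gamma (1 - b))) *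
          hyp2F1 a b (a + b) ((ξ : ℝ) : ℂ) -
        (cdigamma a + cdigamma b + 2 * eulerGammaC) *
          (Complex.Gamma (a + b - 1) / (Complex.Gamma a * Complex.Gamma b)) *
          (((ξ : ℝ) : ℂ) ^ (1 - a - b) * hyp2F1 (1 - b) (1 - a) (2 - a - b) ((ξ : ℝ) : ℂ)) := by
  have hintsub : ∀ {z : ℂ}, (∀ m : ℤ, z ≠ (m : ℂ)) → ∀ k m : ℤ, (k : ℂ) - z ≠ (m : ℂ) :=
    fun hz k m h => hz (k - m) (by push_cast; linear_combination -h)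
  have pa := notPole_of_not_int ha
  have pb := notPole_of_not_int hb
  have pab := notPole_of_not_int hab
  have pa' : NotPole (1 - a) := notPole_of_not_int (by simpa using hintsub ha 1)
  have pb' : NotPole (1 - b) := notPole_of_not_int (by simpa using hintsub hb 1)
  have pab' : NotPole (2 - a - b) := notPole_of_not_int (by
    have := hintsub hab 2
    rw [← sub_sub] at this
    simpa using this)
  have c1 := connection_first pa pb pab hξ
  have c2 := connection_second pa pb pa' pb' pab' hξ
  have hS : w21ln a b ξ = logSol a b ξ := w21ln_eq pa pb hξ
  rw [hS]
  have hsa := sin_pi_mul_ne ha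
  have hsb := sin_pi_mul_ne hb
  have hsab := sin_pi_mul_ne hab
  have ra := Gamma_mul_Gamma_one_sub a
  have rb := Gamma_mul_Gamma_one_sub b
  have rab := Gamma_mul_Gamma_one_sub (a + b)
  have rab' := Gamma_mul_Gamma_one_sub (a + b - 1)
  have da := cdigamma_one_sub ha
  have db := cdigamma_one_sub hb
  have hpi : (Real.pi : ℂ) ≠ 0 := ofReal_ne_zero.2 Real.pi_ne_zero
  rw [← sub_sub] at rab
  rw [show 1 - (a + b - 1) = 2 - a - b by ring, mul_sub, mul_one, Complex.sin_sub_pi] at rab'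
  rw [mul_add, Complex.sin_add] at rab rab' hsab
  have ga := pa.Gamma_ne
  have gb := pb.Gamma_ne
  have ga' := pa'.Gamma_ne
  have gb' := pb'.Gamma_ne
  have gab := pab.Gamma_ne
  have gab' := pab'.Gamma_ne
  generalize (ξ : ℂ) ^ (1 - a - b) * hyp2F1 (1 - b) (1 - a) (2 - a - b) (ξ : ℂ) = w₂ at *
  generalize hyp2F1 a b (a + b) (ξ : ℂ) = w₁ at *
  generalize logSol a b ξ = S at *
  generalize regSol a b ξ = F at *
  generalize sin (Real.pi * a) = sa at *
  generalize sin (Real.pi * b) = sb at *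
  generalize cos (Real.pi * a) = ca at *
  generalize cos (Real.pi * b) = cb at *
  -- By the reflection formula both Gamma quotients carry the same trigonometric factor, up to sign;
  -- by `hg` it is the inverse of `ψ(1-a) + ψ(1-b) - ψ(a) - ψ(b)`.
  have k1 : Gamma (1 - a - b) / (Gamma (1 - a) * Gamma (1 - b)) =
      sa * sb / (Real.pi * (sa * cb + ca * sb)) * (Gamma a * Gamma b / Gamma (a + b)) := by
    have : Gamma (1 - a - b) / (Gamma (1 - a) * Gamma (1 - b)) =
        Gamma (a + b) * Gamma (1 - a - b) / ((Gamma a * Gamma (1 - a)) * (Gamma b * Gamma (1 - b))) *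
          (Gamma a * Gamma b / Gamma (a + b)) := by field_simp
    rw [this, ra, rb, rab]
    congr 1
    field_simp
  have k2 : Gamma (a + b - 1) / (Gamma a * Gamma b) =
      -(sa * sb / (Real.pi * (sa * cb + ca * sb))) *
        (Gamma (1 - a) * Gamma (1 - b) / Gamma (2 - a - b)) := by
    have : Gamma (a + b - 1) / (Gamma a * Gamma b) =
        Gamma (a + b - 1) * Gamma (2 - a - b) /
          ((Gamma a * Gamma (1 - a)) * (Gamma b * Gamma (1 - b))) *
          (Gamma (1 - a) * Gamma (1 - b) / Gamma (2 - a - b)) := by field_simp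
    rw [this, ra, rb, rab']
    congr 1
    field_simp
  have hg : sa * sb / (Real.pi * (sa * cb + ca * sb)) *
      (Real.pi * ca / sa + Real.pi * cb / sb) = 1 := by
    have : Real.pi * ca / sa + Real.pi * cb / sb =
        Real.pi * (sa * cb + ca * sb) / (sa * sb) := by field_simp; ring
    rw [this, div_mul_div_comm, mul_comm (sa * sb)]
    exact div_self (mul_ne_zero (mul_ne_zero hpi hsab) (mul_ne_zero hsa hsb))
  rw [k1, k2]
  rw [← da, ← db] at hg
  generalize sa * sb / (Real.pi * (sa * cb + ca * sb)) = g at *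
  -- This combination of the two connection formulas eliminates the regular solution `F`.
  linear_combination -S * hg + (cdigamma (1 - a) + cdigamma (1 - b) + 2 * eulerGammaC) * g * c1 -
    (cdigamma a + cdigamma b + 2 * eulerGammaC) * g * c2
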